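/- arXiv:1203.2963 — 2 statements merged into one kernel-verified Lean document; each statement's English description precedes it below -/
import Mathlib

section
/- Let A be a dg algebra over F₂ and M a dg (A,A)-bimodule. For ξ ∈ HC_k(M), write ξ = Σ_ℓ c_ℓ r_ℓ ⊗ m_ℓ as a linear combination of pure tensors. Then the element ξ^{⊗2} = Σ_ℓ c_ℓ² r_ℓ ⊗ (m_ℓ ⊗ r_ℓ ⊗ m_ℓ) of HC_{2k}(M ⊗̃_A M) is well-defined modulo the image of 1+τ, i.e., it does not depend on the chosen expression of ξ as a sum of pure tensors. -/
noncomputable section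
open TensorProduct

namespace LT

/-- A differential graded (dg) algebra over a commutative ring `k`: a chain complex with a
degree `-1` differential together with an associative unital multiplication satisfying the
(signed) Leibniz rule; over `𝔽₂` the signs are invisible. The grading is given by an internal
direct sum decomposition into submodules. -/
structure DGA (k : Type) [CommRing k] : Type 1 where
  V : Type
  [acg : AddCommGroup V]
  [mod : Module k V]
  gr : ℤ → Submodule k V
  internal : DirectSum.IsInternal gr
  d : V →ₗ[k] V
  d_d : ∀ x, d (d x) = 0
  d_gr : ∀ i, ∀ x ∈ gr i, d x ∈ gr (i - 1)
  mul : V →ₗ[k] V →ₗ[k] V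
  mul_assoc' : ∀ x y z, mul (mul x y) z = mul x (mul y z)
  one : V
  one_gr : one ∈ gr 0
  one_mul' : ∀ x, mul one x = x
  mul_one' : ∀ x, mul x one = x
  mul_gr : ∀ i j, ∀ x ∈ gr i, ∀ y ∈ gr j, mul x y ∈ gr (i + j)
  leibniz : ∀ i, ∀ x ∈ gr i, ∀ y, d (mul x y) = mul (d x) y + (Int.negOnePow i : ℤ) • mul x (d y)

attribute [instance] DGA.acg
attribute [instance 2000] DGA.mod

variable {k : Type} [CommRing k]

/-- A dg `(A,A)`-bimodule over a dg algebra `A`. -/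
structure DGBimod (A : DGA k) : Type 1 where
  V : Type
  [acg : AddCommGroup V]
  [mod : Module k V]
  gr : ℤ → Submodule k V
  internal : DirectSum.IsInternal gr
  d : V →ₗ[k] V
  d_d : ∀ x, d (d x) = 0
  d_gr : ∀ i, ∀ x ∈ gr i, d x ∈ gr (i - 1)
  actL : A.V →ₗ[k] V →ₗ[k] V
  actR : V →ₗ[k] A.V →ₗ[k] V
  actL_one : ∀ m, actL A.one m = m
  actR_one : ∀ m, actR m A.one = m
  actL_mul : ∀ a b m, actL (A.mul a b) m = actL a (actL b m)
  actR_mul : ∀ m a b, actR (actR m a) b = actR m (A.mul a b)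
  actLR : ∀ a m b, actR (actL a m) b = actL a (actR m b)
  actL_gr : ∀ i j, ∀ a ∈ A.gr i, ∀ m ∈ gr j, actL a m ∈ gr (i + j)
  actR_gr : ∀ i j, ∀ m ∈ gr i, ∀ a ∈ A.gr j, actR m a ∈ gr (i + j)
  leibnizL : ∀ i, ∀ a ∈ A.gr i, ∀ m, d (actL a m) = actL (A.d a) m + (Int.negOnePow i : ℤ) • actL a (d m)
  leibnizR : ∀ j, ∀ m ∈ gr j, ∀ a, d (actR m a) = actR (d m) a + (Int.negOnePow j : ℤ) • actR m (A.d a)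

attribute [instance] DGBimod.acg
attribute [instance 2000] DGBimod.mod

/-- The diagonal bimodule: `A` viewed as a bimodule over itself. -/
def DGA.diag (A : DGA k) : DGBimod A where
  V := A.V
  gr := A.gr
  internal := A.internal
  d := A.d
  d_d := A.d_d
  d_gr := A.d_gr
  actL := A.mul
  actR := A.mul
  actL_one := A.one_mul'
  actR_one := A.mul_one'
  actL_mul := fun a b m => A.mul_assoc' a b m
  actR_mul := fun m a b => A.mul_assoc' m a b
  actLR := fun a m b => A.mul_assoc' a m b
  actL_gr := A.mul_gr
  actR_gr := A.mul_gr
  leibnizL := A.leibniz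
  leibnizR := A.leibniz

variable {A : DGA k}

/-- A homomorphism of dg bimodules of degree `s`: a linear map raising degree by `s`,
commuting with the differentials and the two actions. -/
def IsBHom (M N : DGBimod A) (s : ℤ) (f : M.V →ₗ[k] N.V) : Prop :=
  (∀ i, ∀ x ∈ M.gr i, f x ∈ N.gr (i + s)) ∧
  (∀ x, f (M.d x) = N.d (f x)) ∧
  (∀ a m, f (M.actL a m) = N.actL a (f m)) ∧
  (∀ m a, f (M.actR m a) = N.actR (f m) a)

/-- Graded maps of degree `s` compatible with the bimodule actions (no compatibility with the
differential required); these are used as homotopies. -/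
def grHomSub (M N : DGBimod A) (s : ℤ) : Submodule k (M.V →ₗ[k] N.V) where
  carrier := {f | (∀ i, ∀ x ∈ M.gr i, f x ∈ N.gr (i + s)) ∧
    (∀ a m, f (M.actL a m) = N.actL a (f m)) ∧
    (∀ m a, f (M.actR m a) = N.actR (f m) a)}
  add_mem' := by
    rintro f g ⟨hf1, hf2, hf3⟩ ⟨hg1, hg2, hg3⟩
    refine ⟨fun i x hx => ?_, fun a m => ?_, fun m a => ?_⟩ <;>
      simp [LinearMap.add_apply, hf2, hg2, hf3, hg3]
    exact Submodule.add_mem _ (hf1 i x hx) (hg1 i x hx)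
  zero_mem' := by
    refine ⟨fun i x hx => ?_, fun a m => ?_, fun m a => ?_⟩ <;> simp
  smul_mem' := by
    rintro c f ⟨hf1, hf2, hf3⟩
    refine ⟨fun i x hx => ?_, fun a m => ?_, fun m a => ?_⟩ <;>
      simp [LinearMap.smul_apply, hf2, hf3]
    exact Submodule.smul_mem _ _ (hf1 i x hx)

/-- Bimodule chain maps of degree `s`, as a submodule of all linear maps. -/
def bcmSub (M N : DGBimod A) (s : ℤ) : Submodule k (M.V →ₗ[k] N.V) where
  carrier := {f | IsBHom M N s f}
  add_mem' := by
    rintro f g ⟨hf1, hf0, hf2, hf3⟩ ⟨hg1, hg0, hg2, hg3⟩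
    refine ⟨fun i x hx => ?_, fun x => ?_, fun a m => ?_, fun m a => ?_⟩ <;>
      simp [LinearMap.add_apply, hf0, hg0, hf2, hg2, hf3, hg3]
    exact Submodule.add_mem _ (hf1 i x hx) (hg1 i x hx)
  zero_mem' := by
    refine ⟨fun i x hx => ?_, fun x => ?_, fun a m => ?_, fun m a => ?_⟩ <;> simp
  smul_mem' := by
    rintro c f ⟨hf1, hf0, hf2, hf3⟩
    refine ⟨fun i x hx => ?_, fun x => ?_, fun a m => ?_, fun m a => ?_⟩ <;>
      simp [LinearMap.smul_apply, hf0, hf2, hf3]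
    exact Submodule.smul_mem _ _ (hf1 i x hx)

/-- The nullhomotopic degree-`s` maps `d ∘ h + h ∘ d` for `h` a degree `s+1` bimodule map. -/
def nullHtpSub (M N : DGBimod A) (s : ℤ) : Submodule k (M.V →ₗ[k] N.V) :=
  Submodule.map
    ((LinearMap.llcomp k M.V N.V N.V N.d) + (LinearMap.lcomp k N.V M.d))
    (grHomSub M N (s + 1))

/-- Homotopy classes of degree-`s` bimodule chain maps `M → N`; for `M` a cell retract this
computes morphisms `Σ^s M → N` in the derived category of dg bimodules. -/
def HtpyHom (M N : DGBimod A) (s : ℤ) :=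
  bcmSub M N s ⧸ Submodule.comap (bcmSub M N s).subtype (nullHtpSub M N s)

instance (M N : DGBimod A) (s : ℤ) : AddCommGroup (HtpyHom M N s) :=
  inferInstanceAs (AddCommGroup (_ ⧸ _))
instance (M N : DGBimod A) (s : ℤ) : Module k (HtpyHom M N s) :=
  inferInstanceAs (Module k (_ ⧸ _))


/-- Homology in degree `n` of a graded module with "relations": the degree-`n` part of the
homology of the quotient complex `(T/N, d)` where the grading of `T/N` is induced by `gr`.
Taking `N = ⊥` gives ordinary graded homology. -/
def Hgr (T : Type) [AddCommGroup T] [Module k T] (gr : ℤ → Submodule k T)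
    (N : Submodule k T) (d : T →ₗ[k] T) (n : ℤ) : Type :=
  ↥((gr n ⊔ N) ⊓ Submodule.comap d N) ⧸
    Submodule.comap ((gr n ⊔ N) ⊓ Submodule.comap d N).subtype
      (Submodule.map d (gr (n + 1) ⊔ N) ⊔ N)

instance (T : Type) [AddCommGroup T] [Module k T] (gr : ℤ → Submodule k T)
    (N : Submodule k T) (d : T →ₗ[k] T) (n : ℤ) : AddCommGroup (Hgr T gr N d n) :=
  inferInstanceAs (AddCommGroup (_ ⧸ _))
instance (T : Type) [AddCommGroup T] [Module k T] (gr : ℤ → Submodule k T)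
    (N : Submodule k T) (d : T →ₗ[k] T) (n : ℤ) : Module k (Hgr T gr N d n) :=
  inferInstanceAs (Module k (_ ⧸ _))

/-- `f` induces an isomorphism on (graded) homology, with a degree shift `s`; stated
elementarily: the induced map on homology classes is surjective and injective. -/
def IsQIsoDeg (T S : Type) [AddCommGroup T] [Module k T] [AddCommGroup S] [Module k S]
    (grT : ℤ → Submodule k T) (grS : ℤ → Submodule k S)
    (dT : T →ₗ[k] T) (dS : S →ₗ[k] S) (s : ℤ) (f : T →ₗ[k] S) : Prop :=
  ∀ n : ℤ,
    (∀ y ∈ grS (n + s), dS y = 0 →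
      ∃ x ∈ grT n, dT x = 0 ∧ f x - y ∈ Submodule.map dS (grS (n + s + 1))) ∧
    (∀ x ∈ grT n, dT x = 0 → f x ∈ Submodule.map dS (grS (n + s + 1)) →
      x ∈ Submodule.map dT (grT (n + 1)))

variable {A : DGA k}

/-- The bilinear "sandwich" map `(a, b) ↦ a · m · b` for a fixed element `m` of a bimodule. -/
def sandwich (M : DGBimod A) (m : M.V) : A.V →ₗ[k] A.V →ₗ[k] M.V :=
  LinearMap.mk₂ k (fun a b => M.actR (M.actL a m) b)
    (fun a₁ a₂ b => by simp)
    (fun c a b => by simp)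
    (fun a b₁ b₂ => by simp)
    (fun c a b => by simp)

/-- The bimodule map `A ⊗ A → M`, `a ⊗ b ↦ a · m · b`. -/
def sandwichT (M : DGBimod A) (m : M.V) : (A.V ⊗[k] A.V) →ₗ[k] M.V :=
  TensorProduct.lift (sandwich M m)

/-- `S'/S` is a free dg bimodule: there is a family of "generators" `g i` of degrees `deg i`,
closed cycles modulo `S`, which generate `S'` freely over `A ⊗ A` modulo `S`. -/
def IsFreeStep (M : DGBimod A) (S S' : Submodule k M.V) : Prop :=
  ∃ (I : Type) (g : I → M.V) (deg : I → ℤ),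
    (∀ i, g i ∈ S') ∧ (∀ i, M.d (g i) ∈ S) ∧
    (∀ i p q, ∀ a ∈ A.gr p, ∀ b ∈ A.gr q, M.actR (M.actL a (g i)) b ∈ M.gr (p + q + deg i)) ∧
    S' ≤ S ⊔ (⨆ i, LinearMap.range (sandwichT M (g i))) ∧
    (∀ (u : Finset I) (c : I → A.V ⊗[k] A.V),
      (∑ i ∈ u, sandwichT M (g i) (c i)) ∈ S → ∀ i ∈ u, c i = 0)

/-- As `IsFreeStep`, with a finite generating family. -/
def IsFreeStepFin (M : DGBimod A) (S S' : Submodule k M.V) : Prop :=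
  ∃ (I : Type) (_ : Finite I) (g : I → M.V) (deg : I → ℤ),
    (∀ i, g i ∈ S') ∧ (∀ i, M.d (g i) ∈ S) ∧
    (∀ i p q, ∀ a ∈ A.gr p, ∀ b ∈ A.gr q, M.actR (M.actL a (g i)) b ∈ M.gr (p + q + deg i)) ∧
    S' ≤ S ⊔ (⨆ i, LinearMap.range (sandwichT M (g i))) ∧
    (∀ (u : Finset I) (c : I → A.V ⊗[k] A.V),
      (∑ i ∈ u, sandwichT M (g i) (c i)) ∈ S → ∀ i ∈ u, c i = 0)

/-- A filtration exhibiting `M` as a cell bimodule. -/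
def IsCellFiltration (M : DGBimod A) (Fil : ℕ → Submodule k M.V) : Prop :=
  Fil 0 = ⊥ ∧ Monotone Fil ∧ (⨆ n, Fil n) = ⊤ ∧
  (∀ n, ∀ x ∈ Fil n, M.d x ∈ Fil n) ∧
  (∀ n a, ∀ x ∈ Fil n, M.actL a x ∈ Fil n) ∧
  (∀ n a, ∀ x ∈ Fil n, M.actR x a ∈ Fil n) ∧
  (∀ n, IsFreeStep M (Fil n) (Fil (n + 1)))

/-- A cell bimodule: admits a filtration with free subquotients. -/
def IsCellBimod (M : DGBimod A) : Prop := ∃ Fil, IsCellFiltration M Fil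

/-- A finite cell bimodule: a finite filtration with finite-rank free subquotients. -/
def IsFiniteCellBimod (M : DGBimod A) : Prop :=
  ∃ Fil, (Fil 0 = ⊥ ∧ Monotone Fil ∧ (⨆ n, Fil n) = ⊤ ∧
    (∀ n, ∀ x ∈ Fil n, M.d x ∈ Fil n) ∧
    (∀ n a, ∀ x ∈ Fil n, M.actL a x ∈ Fil n) ∧
    (∀ n a, ∀ x ∈ Fil n, M.actR x a ∈ Fil n) ∧
    (∀ n, IsFreeStepFin M (Fil n) (Fil (n + 1)))) ∧ (∃ n₀, Fil n₀ = ⊤)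

/-- A (finite) cell retract: a subcomplex of a (finite) cell bimodule whose inclusion admits
a bimodule retraction. -/
def IsCellRetract (P : DGBimod A) : Prop :=
  ∃ (C : DGBimod A), IsCellBimod C ∧
    ∃ (ι : P.V →ₗ[k] C.V) (r : C.V →ₗ[k] P.V),
      IsBHom P C 0 ι ∧ IsBHom C P 0 r ∧ Function.Injective ι ∧ r.comp ι = LinearMap.id

def IsFiniteCellRetract (P : DGBimod A) : Prop :=
  ∃ (C : DGBimod A), IsFiniteCellBimod C ∧
    ∃ (ι : P.V →ₗ[k] C.V) (r : C.V →ₗ[k] P.V),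
      IsBHom P C 0 ι ∧ IsBHom C P 0 r ∧ Function.Injective ι ∧ r.comp ι = LinearMap.id

/-- `ρ : R → M` is a resolution: a quasi-isomorphism of dg bimodules from a cell retract. -/
def IsResolution (R M : DGBimod A) (ρ : R.V →ₗ[k] M.V) : Prop :=
  IsCellRetract R ∧ IsBHom R M 0 ρ ∧ IsQIsoDeg R.V M.V R.gr M.gr R.d M.d 0 ρ

/-- A bimodule is perfect if it admits a resolution by a finite cell retract. -/
def IsPerfect (M : DGBimod A) : Prop :=
  ∃ (R : DGBimod A) (ρ : R.V →ₗ[k] M.V),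
    IsFiniteCellRetract R ∧ IsBHom R M 0 ρ ∧ IsQIsoDeg R.V M.V R.gr M.gr R.d M.d 0 ρ

/-- `A` is homologically smooth: perfect as a bimodule over itself. -/
def HomSmooth (A : DGA k) : Prop := IsPerfect A.diag

/-- The homology of the dg algebra `A` in degree `n`. -/
abbrev AlgH (A : DGA k) (n : ℤ) := Hgr A.V A.gr ⊥ A.d n

/-- `A` is homologically proper: its total homology is finitely generated. -/
def HomProper (A : DGA k) : Prop :=
  (∀ n, Module.Finite k (AlgH A n)) ∧ (Set.Finite {n : ℤ | Nontrivial (AlgH A n)})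

/-- A dg bimodule is bounded if it is supported in finitely many gradings. -/
def BoundedBimod (M : DGBimod A) : Prop := ∃ u : Finset ℤ, ∀ i ∉ u, M.gr i = ⊥

/-! ### Bicomplexes and the spectral sequences of their two filtrations -/

/-- A bicomplex of `k`-modules "with relations", presented as one ambient module with a
bigrading by submodules, a horizontal differential `dh` (of bidegree `(-1,0)`), a vertical
differential `dv` (of bidegree `(0,-1)`) and a submodule `N` of relations (so that the actual
bicomplex is the quotient by `N`; take `N = ⊥` for an honest bicomplex). -/
structure RelBicx (k : Type) [CommRing k] : Type 1 where
  T : Type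
  [acg : AddCommGroup T]
  [mod : Module k T]
  gr : ℤ → ℤ → Submodule k T
  N : Submodule k T
  dh : T →ₗ[k] T
  dv : T →ₗ[k] T

attribute [instance] RelBicx.acg RelBicx.mod

namespace RelBicx

variable {k : Type} [CommRing k] (B : RelBicx k)

/-- The total differential. -/
def D : B.T →ₗ[k] B.T := B.dh + B.dv

/-- The column filtration (by the first index `p`) of the total complex, in total degree `n`. -/
def Fcol (p n : ℤ) : Submodule k B.T := ⨆ (i : ℤ) (_ : i ≤ p), B.gr i (n - i)

/-- The row filtration (by the second index `q`) of the total complex, in total degree `n`. -/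
def Frow (q n : ℤ) : Submodule k B.T := ⨆ (j : ℤ) (_ : j ≤ q), B.gr (n - j) j

/-- Approximate cycles for the spectral sequence of the filtration `F`:
elements of filtration `p` (mod `N`) whose total differential drops filtration by `r`. -/
def Zpage (F : ℤ → ℤ → Submodule k B.T) (r p n : ℤ) : Submodule k B.T :=
  (F p n ⊔ B.N) ⊓ Submodule.comap B.D (F (p - r) (n - 1) ⊔ B.N)

/-- The boundaries subobject for the `r`-th page at filtration `p`, total degree `n`. -/
def Bpage (F : ℤ → ℤ → Submodule k B.T) (r p n : ℤ) : Submodule k B.T :=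
  Submodule.map B.D (B.Zpage F (r - 1) (p + r - 1) (n + 1)) ⊔ B.Zpage F (r - 1) (p - 1) n ⊔ B.N

/-- The `r`-th page of the spectral sequence of the filtration `F`, at filtration degree `p`
and total degree `n` (the classical subquotient description `Z^r/B^r`). -/
def Epage (F : ℤ → ℤ → Submodule k B.T) (r p n : ℤ) : Type :=
  ↥(B.Zpage F r p n) ⧸
    Submodule.comap (B.Zpage F r p n).subtype (B.Bpage F r p n)

instance (F : ℤ → ℤ → Submodule k B.T) (r p n : ℤ) : AddCommGroup (B.Epage F r p n) :=
  inferInstanceAs (AddCommGroup (_ ⧸ _))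
instance (F : ℤ → ℤ → Submodule k B.T) (r p n : ℤ) : Module k (B.Epage F r p n) :=
  inferInstanceAs (Module k (_ ⧸ _))

/-- The spectral sequence `ᵛʰE` (filtration by columns; one first takes homology with respect
to the vertical differential). Indexing: `vhE r p q` is `ᵛʰE^r_{p,q}`. -/
def vhE (r p q : ℤ) : Type := B.Epage B.Fcol r p (p + q)

/-- The spectral sequence `ʰᵛE` (filtration by rows; one first takes homology with respect to
the horizontal differential), in the transposed indexing of Lipshitz–Treumann:
`hvE r p q` is `ʰᵛE^r_{p,q}`, whose filtration index is the row `q`. -/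
def hvE (r p q : ℤ) : Type := B.Epage B.Frow r q (p + q)

instance (r p q : ℤ) : AddCommGroup (B.vhE r p q) := inferInstanceAs (AddCommGroup (Epage _ _ _ _ _))
instance (r p q : ℤ) : Module k (B.vhE r p q) := inferInstanceAs (Module k (Epage _ _ _ _ _))
instance (r p q : ℤ) : AddCommGroup (B.hvE r p q) := inferInstanceAs (AddCommGroup (Epage _ _ _ _ _))
instance (r p q : ℤ) : Module k (B.hvE r p q) := inferInstanceAs (Module k (Epage _ _ _ _ _))

/-- Vanishing of the differential leaving the `r`-th page at position `(p, n)`: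
the total differential of any approximate cycle is, up to boundaries of earlier pages and
relations, an approximate cycle of deeper filtration. -/
def zeroDiff (F : ℤ → ℤ → Submodule k B.T) (r p n : ℤ) : Prop :=
  Submodule.map B.D (B.Zpage F r p n) ≤
    Submodule.map B.D (B.Zpage F (r - 1) (p - 1) n) ⊔ B.Zpage F (r - 1) (p - r - 1) (n - 1) ⊔ B.N

/-- The spectral sequence of the filtration `F` collapses at the `r₀`-th page. -/
def collapsesAt (F : ℤ → ℤ → Submodule k B.T) (r₀ : ℤ) : Prop :=
  ∀ r : ℤ, r₀ ≤ r → ∀ p n : ℤ, B.zeroDiff F r p n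

/-- The part of total degree `n` of the bicomplex. -/
def totGr (n : ℤ) : Submodule k B.T := ⨆ p : ℤ, B.gr p (n - p)

/-- The degree-`n` homology of the total complex (of the quotient by `N`). -/
def Htot (n : ℤ) : Type :=
  ↥((B.totGr n ⊔ B.N) ⊓ Submodule.comap B.D B.N) ⧸
    Submodule.comap ((B.totGr n ⊔ B.N) ⊓ Submodule.comap B.D B.N).subtype
      (Submodule.map B.D (B.totGr (n + 1) ⊔ B.N) ⊔ B.N)

instance (n : ℤ) : AddCommGroup (B.Htot n) := inferInstanceAs (AddCommGroup (_ ⧸ _))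
instance (n : ℤ) : Module k (B.Htot n) := inferInstanceAs (Module k (_ ⧸ _))

/-- The graded piece `F_p H_n / F_{p-1} H_n` of the filtration induced by `F` on the homology
of the total complex. -/
def grHtot (F : ℤ → ℤ → Submodule k B.T) (p n : ℤ) : Type :=
  ↥((F p n ⊔ B.N) ⊓ Submodule.comap B.D B.N) ⧸
    Submodule.comap ((F p n ⊔ B.N) ⊓ Submodule.comap B.D B.N).subtype
      (((F (p - 1) n ⊔ B.N) ⊓ Submodule.comap B.D B.N) ⊔
        Submodule.map B.D (B.totGr (n + 1) ⊔ B.N) ⊔ B.N)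

instance (F : ℤ → ℤ → Submodule k B.T) (p n : ℤ) : AddCommGroup (B.grHtot F p n) :=
  inferInstanceAs (AddCommGroup (_ ⧸ _))
instance (F : ℤ → ℤ → Submodule k B.T) (p n : ℤ) : Module k (B.grHtot F p n) :=
  inferInstanceAs (Module k (_ ⧸ _))

/-- The spectral sequence of the filtration `F` converges to the homology of the total
complex: for every position the pages eventually stabilize and agree with the associated
graded of the induced filtration on the homology of the total complex. -/
def convergesTo (F : ℤ → ℤ → Submodule k B.T) : Prop :=
  ∀ p n : ℤ, ∃ r₀ : ℤ, ∀ r : ℤ, r₀ ≤ r →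
    Nonempty (B.Epage F r p n ≃ₗ[k] B.grHtot F p n)

end RelBicx
/-! ### Hochschild chains, the involution `τ`, and the Hochschild–Tate bicomplex (over `𝔽₂`) -/

section Hochschild

variable {A : DGA (ZMod 2)} (R M : DGBimod A)

/-- The ambient space `R ⊗ M` of the Hochschild chain complex `HC(A, M)` (with respect to the
resolution `R` of the diagonal bimodule): `HC(A,M) = (R ⊗ M)/rel2`. -/
abbrev T2 := R.V ⊗[ZMod 2] M.V

/-- The differential `∂(r ⊗ m) = ∂r ⊗ m + r ⊗ ∂m` (char. 2). -/
def d2 : T2 R M →ₗ[ZMod 2] T2 R M :=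
  TensorProduct.map R.d LinearMap.id + TensorProduct.map LinearMap.id M.d

/-- The grading of `R ⊗ M`. -/
def gr2 (n : ℤ) : Submodule (ZMod 2) (T2 R M) :=
  Submodule.span (ZMod 2)
    {z | ∃ i j, ∃ r ∈ R.gr i, ∃ m ∈ M.gr j, i + j = n ∧ z = r ⊗ₜ[ZMod 2] m}

/-- The Hochschild relations `ra ⊗ m ∼ r ⊗ am` and `ar ⊗ m ∼ r ⊗ ma` (char. 2). -/
def rel2 : Submodule (ZMod 2) (T2 R M) :=
  Submodule.span (ZMod 2)
    ({z | ∃ r a m, z = (R.actR r a) ⊗ₜ[ZMod 2] m + r ⊗ₜ[ZMod 2] (M.actL a m)} ∪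
     {z | ∃ r a m, z = (R.actL a r) ⊗ₜ[ZMod 2] m + r ⊗ₜ[ZMod 2] (M.actR m a)})

/-- The underlying space of the Hochschild chain complex `HC(A, M)`. -/
abbrev HCQ := T2 R M ⧸ rel2 R M

/-- The Hochschild homology `HH_n(A, M)` (computed from the chosen resolution `R → A`). -/
abbrev HH (n : ℤ) := Hgr (T2 R M) (gr2 R M) (rel2 R M) (d2 R M) n

/-- The ambient space `R ⊗ (M ⊗ (R ⊗ M))` of the Hochschild chain complex of the derived
tensor product: `HC(A, M ⊗̃_A M) = (R ⊗ (M ⊠ R ⊠ M))/∼ = (R ⊗ M ⊗ R ⊗ M)/rel4`. -/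
abbrev T4 := R.V ⊗[ZMod 2] (M.V ⊗[ZMod 2] (R.V ⊗[ZMod 2] M.V))

/-- The differential of `R ⊗ M ⊗ R ⊗ M` (char. 2; no signs). -/
def d4 : T4 R M →ₗ[ZMod 2] T4 R M :=
  TensorProduct.map R.d LinearMap.id +
  TensorProduct.map LinearMap.id (TensorProduct.map M.d LinearMap.id +
    TensorProduct.map LinearMap.id (TensorProduct.map R.d LinearMap.id +
      TensorProduct.map LinearMap.id M.d))

/-- The grading of `R ⊗ M ⊗ R ⊗ M`. -/
def gr4 (n : ℤ) : Submodule (ZMod 2) (T4 R M) :=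
  Submodule.span (ZMod 2)
    {z | ∃ i₁ j₁ i₂ j₂, ∃ r ∈ R.gr i₁, ∃ m ∈ M.gr j₁, ∃ r' ∈ R.gr i₂, ∃ m' ∈ M.gr j₂,
      i₁ + j₁ + i₂ + j₂ = n ∧ z = r ⊗ₜ[ZMod 2] (m ⊗ₜ[ZMod 2] (r' ⊗ₜ[ZMod 2] m'))}

/-- The combined relations presenting `HC(A, M ⊗̃_A M)` as a quotient of `R ⊗ M ⊗ R ⊗ M`:
the two relations of the naive tensor products `M ⊠_A R ⊠_A M` and the two outer Hochschild
relations (char. 2). -/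
def rel4 : Submodule (ZMod 2) (T4 R M) :=
  Submodule.span (ZMod 2)
    ({z | ∃ r a m r' m', z = (R.actR r a) ⊗ₜ[ZMod 2] (m ⊗ₜ[ZMod 2] (r' ⊗ₜ[ZMod 2] m')) +
        r ⊗ₜ[ZMod 2] ((M.actL a m) ⊗ₜ[ZMod 2] (r' ⊗ₜ[ZMod 2] m'))} ∪
     {z | ∃ r a m r' m', z = (R.actL a r) ⊗ₜ[ZMod 2] (m ⊗ₜ[ZMod 2] (r' ⊗ₜ[ZMod 2] m')) +
        r ⊗ₜ[ZMod 2] (m ⊗ₜ[ZMod 2] (r' ⊗ₜ[ZMod 2] (M.actR m' a)))} ∪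
     {z | ∃ r a m r' m', z = r ⊗ₜ[ZMod 2] ((M.actR m a) ⊗ₜ[ZMod 2] (r' ⊗ₜ[ZMod 2] m')) +
        r ⊗ₜ[ZMod 2] (m ⊗ₜ[ZMod 2] ((R.actL a r') ⊗ₜ[ZMod 2] m'))} ∪
     {z | ∃ r a m r' m', z = r ⊗ₜ[ZMod 2] (m ⊗ₜ[ZMod 2] ((R.actR r' a) ⊗ₜ[ZMod 2] m')) +
        r ⊗ₜ[ZMod 2] (m ⊗ₜ[ZMod 2] (r' ⊗ₜ[ZMod 2] (M.actL a m')))})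


instance {A : DGA (ZMod 2)} (R M : DGBimod A) :
    HasQuotient (T4 R M) (Submodule (ZMod 2) (T4 R M)) := Submodule.hasQuotient

/-- The underlying space of the Hochschild chain complex `HC(A, M ⊗̃_A M)`. -/
abbrev HCQ4 := T4 R M ⧸ rel4 R M

/-- The Hochschild homology `HH_n(A, M ⊗̃_A M)` of the derived tensor square. -/
abbrev HH4 (n : ℤ) := Hgr (T4 R M) (gr4 R M) (rel4 R M) (d4 R M) n

/-- The involution `τ` of `R ⊗ (M ⊗ (R ⊗ M))` exchanging the two halves:
`r ⊗ (m ⊗ (r' ⊗ m')) ↦ r' ⊗ (m' ⊗ (r ⊗ m))`. -/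
def tau4 : T4 R M →ₗ[ZMod 2] T4 R M :=
  ((TensorProduct.assoc (ZMod 2) R.V M.V (R.V ⊗[ZMod 2] M.V)).toLinearMap).comp
    (((TensorProduct.comm (ZMod 2) (R.V ⊗[ZMod 2] M.V) (R.V ⊗[ZMod 2] M.V)).toLinearMap).comp
      ((TensorProduct.assoc (ZMod 2) R.V M.V (R.V ⊗[ZMod 2] M.V)).symm.toLinearMap))

/-- The Hochschild–Tate bicomplex `HC^{Tate}(A, M ⊗̃_A M)`: the `ℤ`-periodic bicomplex whose
columns are the Hochschild complex of `M ⊗̃_A M` and whose horizontal differential is `1 + τ`. -/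
def TateBicx : RelBicx (ZMod 2) where
  T := ℤ →₀ T4 R M
  gr := fun p q => Submodule.map (Finsupp.lsingle p) (gr4 R M q)
  N := ⨅ p : ℤ, Submodule.comap (Finsupp.lapply p) (rel4 R M)
  dv := Finsupp.mapRange.linearMap (d4 R M)
  dh := (Finsupp.lmapDomain (T4 R M) (ZMod 2) (fun p => p - 1)).comp
    (Finsupp.mapRange.linearMap (LinearMap.id + tau4 R M))


/-- An element of the Hochschild–Tate bicomplex concentrated in column `p`. -/
def tateSingle (p : ℤ) (x : T4 R M) : (TateBicx R M).T := Finsupp.single p x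

/-- A dg bimodule `M` is `π`-formal (with respect to the resolution `R` of the diagonal
bimodule) if the spectral sequence `ʰᵛE` of the Hochschild–Tate bicomplex of `M ⊗̃_A M`
collapses at the `E³`-page; equivalently, all the induced operations
`d^{2i} : HH_k(A,M) → HH_{k-i}(A,M)`, `i ≥ 2`, vanish. -/
def PiFormalBimod : Prop := (TateBicx R M).collapsesAt (TateBicx R M).Frow 3

/-- A dg algebra is `π`-formal if every dg bimodule over it is `π`-formal. -/
def PiFormalAlg (R : DGBimod A) : Prop := ∀ M : DGBimod A, PiFormalBimod R M

end Hochschild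


section SqHelpers

variable {A : DGA (ZMod 2)} (R M : DGBimod A)

/-- The tensor square `x ↦ x ⊗ x`, as an element of `R ⊗ (M ⊗ (R ⊗ M))`. -/
def sqT (x : T2 R M) : T4 R M :=
  TensorProduct.assoc (ZMod 2) R.V M.V (R.V ⊗[ZMod 2] M.V) (x ⊗ₜ[ZMod 2] x)

/-- The submodule modulo which squares are taken. -/
def sqW : Submodule (ZMod 2) (T4 R M) :=
  LinearMap.range (LinearMap.id + tau4 R M) ⊔ rel4 R M

lemma sqT_tmul (r : R.V) (m : M.V) :
    sqT R M (r ⊗ₜ[ZMod 2] m) = r ⊗ₜ[ZMod 2] (m ⊗ₜ[ZMod 2] (r ⊗ₜ[ZMod 2] m)) := rfl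

lemma sqT_add (x y : T2 R M) :
    sqT R M (x + y) - (sqT R M x + sqT R M y) ∈ sqW R M := by
  refine Submodule.mem_sup_left
    ⟨TensorProduct.assoc (ZMod 2) R.V M.V (R.V ⊗[ZMod 2] M.V) (x ⊗ₜ[ZMod 2] y), ?_⟩
  simp only [sqT, tau4, LinearMap.add_apply, LinearMap.id_apply, LinearMap.comp_apply,
    LinearEquiv.coe_coe, LinearEquiv.symm_apply_apply, TensorProduct.comm_tmul,
    TensorProduct.add_tmul, TensorProduct.tmul_add, map_add]
  abel

lemma sqT_smul (c : ZMod 2) (x : T2 R M) : sqT R M (c • x) = c • c • sqT R M x := by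
  unfold sqT
  rw [← TensorProduct.smul_tmul', TensorProduct.tmul_smul, map_smul, map_smul]

lemma sqT_zero : sqT R M 0 = 0 := by
  simp [sqT]

lemma T4_add_self (x : T4 R M) : x + x = 0 := by
  have h : (2 : ZMod 2) • x = 0 := by
    rw [show (2 : ZMod 2) = 0 from rfl, zero_smul]
  rwa [two_smul] at h

lemma sqT_sum {L : Type} (s : Finset L) (f : L → T2 R M) :
    sqT R M (∑ l ∈ s, f l) - ∑ l ∈ s, sqT R M (f l) ∈ sqW R M := by
  classical
  induction s using Finset.induction_on with
  | empty => simp [sqT_zero]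
  | insert a s ha ih =>
    rw [Finset.sum_insert ha, Finset.sum_insert ha]
    have h := (sqW R M).add_mem (sqT_add R M (f a) (∑ l ∈ s, f l)) ih
    convert h using 1
    abel

lemma sqT_add_mem {x y : T2 R M} (h : sqT R M x + sqT R M y ∈ sqW R M) :
    sqT R M (x + y) ∈ sqW R M := by
  have := (sqW R M).add_mem (sqT_add R M x y) h
  rwa [sub_add_cancel] at this

lemma sqT_rel {z : T2 R M} (hz : z ∈ rel2 R M) : sqT R M z ∈ sqW R M := by
  induction hz using Submodule.span_induction with
  | mem z hz =>
    rcases hz with ⟨r, a, m, rfl⟩ | ⟨r, a, m, rfl⟩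
    · apply sqT_add_mem
      rw [sqT_tmul, sqT_tmul]
      apply Submodule.mem_sup_right
      have h1 : (R.actR r a) ⊗ₜ[ZMod 2] (m ⊗ₜ[ZMod 2] ((R.actR r a) ⊗ₜ[ZMod 2] m)) +
          r ⊗ₜ[ZMod 2] ((M.actL a m) ⊗ₜ[ZMod 2] ((R.actR r a) ⊗ₜ[ZMod 2] m)) ∈ rel4 R M :=
        Submodule.subset_span (Or.inl (Or.inl (Or.inl ⟨r, a, m, R.actR r a, m, rfl⟩)))
      have h2 : r ⊗ₜ[ZMod 2] ((M.actL a m) ⊗ₜ[ZMod 2] ((R.actR r a) ⊗ₜ[ZMod 2] m)) +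
          r ⊗ₜ[ZMod 2] ((M.actL a m) ⊗ₜ[ZMod 2] (r ⊗ₜ[ZMod 2] (M.actL a m))) ∈ rel4 R M :=
        Submodule.subset_span (Or.inr ⟨r, a, M.actL a m, r, m, rfl⟩)
      have h := (rel4 R M).add_mem h1 h2
      rwa [add_assoc, ← add_assoc (r ⊗ₜ[ZMod 2] _), T4_add_self, zero_add] at h
    · apply sqT_add_mem
      rw [sqT_tmul, sqT_tmul]
      apply Submodule.mem_sup_right
      have h1 : (R.actL a r) ⊗ₜ[ZMod 2] (m ⊗ₜ[ZMod 2] ((R.actL a r) ⊗ₜ[ZMod 2] m)) +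
          r ⊗ₜ[ZMod 2] (m ⊗ₜ[ZMod 2] ((R.actL a r) ⊗ₜ[ZMod 2] (M.actR m a))) ∈ rel4 R M :=
        Submodule.subset_span (Or.inl (Or.inl (Or.inr ⟨r, a, m, R.actL a r, m, rfl⟩)))
      have h2 : r ⊗ₜ[ZMod 2] ((M.actR m a) ⊗ₜ[ZMod 2] (r ⊗ₜ[ZMod 2] (M.actR m a))) +
          r ⊗ₜ[ZMod 2] (m ⊗ₜ[ZMod 2] ((R.actL a r) ⊗ₜ[ZMod 2] (M.actR m a))) ∈ rel4 R M :=
        Submodule.subset_span (Or.inl (Or.inr ⟨r, a, m, r, M.actR m a, rfl⟩))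
      have h := (rel4 R M).add_mem h1 h2
      rw [add_comm (r ⊗ₜ[ZMod 2] (M.actR m a ⊗ₜ[ZMod 2] _))] at h
      rwa [add_assoc, ← add_assoc (r ⊗ₜ[ZMod 2] _), T4_add_self, zero_add] at h
  | zero => rw [sqT_zero]; exact Submodule.zero_mem _
  | add x y _ _ hx hy => exact sqT_add_mem R M ((sqW R M).add_mem hx hy)
  | smul c x _ hx =>
    rw [sqT_smul]
    exact Submodule.smul_mem _ _ (Submodule.smul_mem _ _ hx)

lemma sqT_smul_tmul (c : ZMod 2) (r : R.V) (m : M.V) :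
    (c * c) • (r ⊗ₜ[ZMod 2] (m ⊗ₜ[ZMod 2] (r ⊗ₜ[ZMod 2] m))) =
      sqT R M (c • (r ⊗ₜ[ZMod 2] m)) := by
  rw [← sqT_tmul, sqT_smul, mul_smul]

end SqHelpers

/-- **Well-definedness of the squaring operation.** For `ξ ∈ HC_n(A,M)` written as a linear
combination of pure tensors `ξ = ∑ c_ℓ r_ℓ ⊗ m_ℓ`, the element
`ξ^{⊗2} = ∑ c_ℓ² r_ℓ ⊗ (m_ℓ ⊗ r_ℓ ⊗ m_ℓ)` of `HC_{2n}(A, M ⊗̃_A M)` is well defined modulo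
the image of `1 + τ`: it does not depend on the chosen presentation of `ξ`. -/
theorem sq_well_defined
    (A : DGA (ZMod 2)) (R : DGBimod A) (ρ : R.V →ₗ[ZMod 2] A.diag.V)
    (hres : IsResolution R A.diag ρ) (M : DGBimod A) (n : ℤ)
    (L L' : Type) [Fintype L] [Fintype L']
    (c : L → ZMod 2) (r : L → R.V) (m : L → M.V)
    (c' : L' → ZMod 2) (r' : L' → R.V) (m' : L' → M.V)
    (hdeg : ∀ l, ∃ i j, r l ∈ R.gr i ∧ m l ∈ M.gr j ∧ i + j = n)
    (hdeg' : ∀ l, ∃ i j, r' l ∈ R.gr i ∧ m' l ∈ M.gr j ∧ i + j = n)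
    (heq : (∑ l, c l • (r l ⊗ₜ[ZMod 2] m l)) - (∑ l, c' l • (r' l ⊗ₜ[ZMod 2] m' l))
      ∈ rel2 R M) :
    (∑ l, (c l * c l) • (r l ⊗ₜ[ZMod 2] (m l ⊗ₜ[ZMod 2] (r l ⊗ₜ[ZMod 2] m l)))) -
      (∑ l, (c' l * c' l) • (r' l ⊗ₜ[ZMod 2] (m' l ⊗ₜ[ZMod 2] (r' l ⊗ₜ[ZMod 2] m' l)))) ∈
      LinearMap.range (LinearMap.id + tau4 R M) ⊔ rel4 R M := by
  have h1 := sqT_sum R M Finset.univ (fun l => c l • (r l ⊗ₜ[ZMod 2] m l))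
  have h2 := sqT_sum R M Finset.univ (fun l => c' l • (r' l ⊗ₜ[ZMod 2] m' l))
  have h3 := sqT_add R M ((∑ l, c l • (r l ⊗ₜ[ZMod 2] m l)) -
    (∑ l, c' l • (r' l ⊗ₜ[ZMod 2] m' l))) (∑ l, c' l • (r' l ⊗ₜ[ZMod 2] m' l))
  have h4 := sqT_rel R M heq
  rw [sub_add_cancel] at h3
  simp only [sqT_smul_tmul]
  change _ ∈ sqW R M
  have h := (sqW R M).add_mem (Submodule.sub_mem _ h2 h1) (Submodule.add_mem _ h3 h4)
  convert h using 1
  abel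
end LT
end
end

section
/- Let A be a dg algebra over F₂ and M a dg (A,A)-bimodule. For each k, the assignment ξ ↦ ξ^{⊗2} + Im(1+τ) is an F₂-linear isomorphism from HC_k(M) onto ^{hv}E¹_{p,2k} = (ker(1+τ)/Im(1+τ)) in degree 2k, for every p. Moreover ^{hv}E¹_{p,2k+1} = 0 for all p and k. -/
noncomputable section
open TensorProduct

namespace LT

variable {k : Type} [CommRing k]

variable {A : DGA k}

variable {A : DGA k}

/-- The degree-`n` part of the Hochschild chain complex `HC(A,M)`. -/
abbrev HCdeg {A : DGA (ZMod 2)} (R M : DGBimod A) (n : ℤ) :=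
  ↥(gr2 R M n ⊔ rel2 R M) ⧸
    Submodule.comap (gr2 R M n ⊔ rel2 R M).subtype (rel2 R M)

section FrobeniusProof

section Part1

section Sq
variable {X : Type} [AddCommGroup X] [Module (ZMod 2) X]

theorem z2_add_self {V : Type} [AddCommGroup V] [Module (ZMod 2) V] (x : V) : x + x = 0 := by
  rw [← two_smul (ZMod 2) x, show (2 : ZMod 2) = 0 from rfl, zero_smul]

theorem z2_neg {V : Type} [AddCommGroup V] [Module (ZMod 2) V] (x : V) : -x = x := by
  rw [neg_eq_iff_add_eq_zero, z2_add_self]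

theorem z2_sub {V : Type} [AddCommGroup V] [Module (ZMod 2) V] (x y : V) : x - y = x + y := by
  rw [sub_eq_add_neg, z2_neg]

theorem z2_sq (c : ZMod 2) : c * c = c := by
  revert c; decide

theorem repr_comm {B : Type} (b : Module.Basis B (ZMod 2) X) (y : X ⊗[ZMod 2] X) (i j : B) :
    (b.tensorProduct b).repr (TensorProduct.comm (ZMod 2) X X y) (i, j) =
      (b.tensorProduct b).repr y (j, i) := by
  induction y with
  | zero => simp
  | tmul x y => simp [mul_comm]
  | add x y hx hy => simp only [map_add, Finsupp.add_apply, hx, hy]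

theorem sq_inj (u : X) (v : X ⊗[ZMod 2] X)
    (h : u ⊗ₜ[ZMod 2] u = v + TensorProduct.comm (ZMod 2) X X v) : u = 0 := by
  obtain ⟨B, ⟨b⟩⟩ := Module.Basis.exists_basis (ZMod 2) X
  apply b.ext_elem
  intro i
  have h1 := congrArg (fun t => (b.tensorProduct b).repr t (i, i)) h
  simp only [map_add, Finsupp.add_apply, repr_comm] at h1
  rw [z2_add_self] at h1
  simp [z2_sq] at h1
  simp [h1]

theorem sq_surj (y : X ⊗[ZMod 2] X) (h : y + TensorProduct.comm (ZMod 2) X X y = 0) :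
    ∃ (u : X) (v : X ⊗[ZMod 2] X),
      y = u ⊗ₜ[ZMod 2] u + (v + TensorProduct.comm (ZMod 2) X X v) := by
  classical
  obtain ⟨B, ⟨b⟩⟩ := Module.Basis.exists_basis (ZMod 2) X
  obtain ⟨_, _⟩ := exists_wellFoundedLT B
  let f := (b.tensorProduct b).repr y
  let u : X := b.repr.symm (Finsupp.comapDomain (fun i => (i, i)) f
    (fun i _ j _ hij => (Prod.mk.inj hij).1))
  have hu : ∀ i, b.repr u i = f (i, i) := by
    intro i; simp only [u, LinearEquiv.apply_symm_apply]; rfl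
  let y' := y + u ⊗ₜ[ZMod 2] u
  let v : X ⊗[ZMod 2] X := (b.tensorProduct b).repr.symm
    (Finsupp.filter (fun p : B × B => p.1 < p.2) ((b.tensorProduct b).repr y'))
  have hsym : TensorProduct.comm (ZMod 2) X X y' = y' := by
    have : TensorProduct.comm (ZMod 2) X X y = y := by
      rw [← z2_neg (TensorProduct.comm (ZMod 2) X X y)]
      exact (eq_neg_of_add_eq_zero_left h).symm
    simp [y', this]
  refine ⟨u, v, ?_⟩
  have key : y' = v + TensorProduct.comm (ZMod 2) X X v := by
    apply (b.tensorProduct b).ext_elem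
    rintro ⟨i, j⟩
    rw [map_add _ v, Finsupp.add_apply, repr_comm]
    simp only [v, LinearEquiv.apply_symm_apply, Finsupp.filter_apply]
    rcases lt_trichotomy i j with hij | hij | hij
    · simp [hij, hij.not_gt]
    · subst hij
      simp [y', hu, z2_sq, f, z2_add_self]
    · simp only [hij.not_gt, hij, if_true, if_false, zero_add]
      rw [← repr_comm, hsym]
  rw [← key]
  simp only [y']
  rw [add_comm y, ← add_assoc, z2_add_self, zero_add]

end Sq

end Part1

section Part2

section Graded
variable {V W : Type} [AddCommGroup V] [Module (ZMod 2) V] [AddCommGroup W] [Module (ZMod 2) W]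

theorem exists_coact (gr : ℤ → Submodule (ZMod 2) V) (h : DirectSum.IsInternal gr) :
    ∃ δ : V →ₗ[ZMod 2] (ℤ →₀ V), ∀ i, ∀ v ∈ gr i, δ v = Finsupp.single i v := by
  classical
  let e := LinearEquiv.ofBijective (DirectSum.coeLinearMap gr) h
  refine ⟨(DirectSum.toModule (ZMod 2) ℤ (ℤ →₀ V)
    (fun i => (Finsupp.lsingle i).comp (gr i).subtype)).comp e.symm.toLinearMap, ?_⟩
  intro i v hv
  have : e.symm v = DirectSum.lof (ZMod 2) ℤ (fun i => gr i) i ⟨v, hv⟩ := by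
    rw [LinearEquiv.symm_apply_eq]
    exact (DirectSum.coeLinearMap_lof gr i ⟨v, hv⟩).symm
  simp [this]

theorem coact_tensor (δV : V →ₗ[ZMod 2] (ℤ →₀ V)) (δW : W →ₗ[ZMod 2] (ℤ →₀ W)) :
    ∃ δ : V ⊗[ZMod 2] W →ₗ[ZMod 2] (ℤ →₀ V ⊗[ZMod 2] W), ∀ i j v w,
      δV v = Finsupp.single i v → δW w = Finsupp.single j w →
      δ (v ⊗ₜ w) = Finsupp.single (i + j) (v ⊗ₜ w) := by
  refine ⟨((Finsupp.lmapDomain (V ⊗[ZMod 2] W) (ZMod 2) (fun p : ℤ × ℤ => p.1 + p.2)).comp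
    (finsuppTensorFinsupp (ZMod 2) (ZMod 2) V W ℤ ℤ).toLinearMap).comp
      (TensorProduct.map δV δW), ?_⟩
  intro i j v w hv hw
  simp [hv, hw, Finsupp.mapDomain_single]

/-- induction on homogeneous elements -/
theorem hom_induction {gr : ℤ → Submodule (ZMod 2) V} (h : DirectSum.IsInternal gr)
    {P : V → Prop} (h1 : ∀ i, ∀ v ∈ gr i, P v) (h0 : P 0)
    (h2 : ∀ x y, P x → P y → P (x + y)) (v : V) : P v := by
  have : v ∈ ⨆ i, gr i := by rw [h.submodule_iSup_eq_top]; trivial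
  exact Submodule.iSup_induction gr (motive := P) this h1 h0 h2

end Graded

variable {A : DGA (ZMod 2)} (R M : DGBimod A)

theorem tmul2_mem {i j n : ℤ} {r : R.V} {m : M.V} (hr : r ∈ R.gr i) (hm : m ∈ M.gr j)
    (h : i + j = n) : r ⊗ₜ[ZMod 2] m ∈ gr2 R M n :=
  Submodule.subset_span ⟨i, j, r, hr, m, hm, h, rfl⟩

theorem tmul4_mem {i j i' j' n : ℤ} {r r' : R.V} {m m' : M.V} (hr : r ∈ R.gr i)
    (hm : m ∈ M.gr j) (hr' : r' ∈ R.gr i') (hm' : m' ∈ M.gr j') (h : i + j + i' + j' = n) :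
    r ⊗ₜ[ZMod 2] (m ⊗ₜ[ZMod 2] (r' ⊗ₜ[ZMod 2] m')) ∈ gr4 R M n :=
  Submodule.subset_span ⟨i, j, i', j', r, hr, m, hm, r', hr', m', hm', h, rfl⟩

theorem iSup_gr2 (x : T2 R M) : x ∈ ⨆ n, gr2 R M n := by
  induction x using TensorProduct.induction_on with
  | zero => exact Submodule.zero_mem _
  | add x y hx hy => exact Submodule.add_mem _ hx hy
  | tmul r m =>
    induction r using hom_induction R.internal with
    | h0 => simp
    | h2 x y hx hy => rw [add_tmul]; exact Submodule.add_mem _ hx hy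
    | h1 i r hr =>
      induction m using hom_induction M.internal with
      | h0 => simp
      | h2 x y hx hy => rw [tmul_add]; exact Submodule.add_mem _ hx hy
      | h1 j m hm => exact Submodule.mem_iSup_of_mem (i + j) (tmul2_mem R M hr hm rfl)

/-- additive induction on `T4` from pure tensors -/
theorem T4_pure_induction {P : T4 R M → Prop} (h0 : P 0) (hadd : ∀ x y, P x → P y → P (x + y))
    (h1 : ∀ r m r' m', P (r ⊗ₜ[ZMod 2] (m ⊗ₜ[ZMod 2] (r' ⊗ₜ[ZMod 2] m')))) (x : T4 R M) : P x := by
  induction x using TensorProduct.induction_on with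
  | zero => exact h0
  | add x y hx hy => exact hadd _ _ hx hy
  | tmul r y =>
    induction y using TensorProduct.induction_on with
    | zero => simpa using h0
    | add x y hx hy => rw [tmul_add]; exact hadd _ _ hx hy
    | tmul m y =>
      induction y using TensorProduct.induction_on with
      | zero => simpa using h0
      | add x y hx hy => rw [tmul_add, tmul_add]; exact hadd _ _ hx hy
      | tmul r' m' => exact h1 _ _ _ _

theorem iSup_gr4 (x : T4 R M) : x ∈ ⨆ n, gr4 R M n := by
  refine T4_pure_induction R M (Submodule.zero_mem _) (fun _ _ => Submodule.add_mem _) ?_ x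
  intro r m r' m'
  induction r using hom_induction R.internal with
  | h0 => simp
  | h2 x y hx hy => rw [add_tmul]; exact Submodule.add_mem _ hx hy
  | h1 i r hr =>
  induction m using hom_induction M.internal with
  | h0 => simp
  | h2 x y hx hy => rw [add_tmul, tmul_add]; exact Submodule.add_mem _ hx hy
  | h1 j m hm =>
  induction r' using hom_induction R.internal with
  | h0 => simp
  | h2 x y hx hy => rw [add_tmul, tmul_add, tmul_add]; exact Submodule.add_mem _ hx hy
  | h1 i' r' hr' =>
  induction m' using hom_induction M.internal with
  | h0 => simp
  | h2 x y hx hy => rw [tmul_add, tmul_add, tmul_add]; exact Submodule.add_mem _ hx hy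
  | h1 j' m' hm' =>
  exact Submodule.mem_iSup_of_mem _ (tmul4_mem R M hr hm hr' hm' rfl)

theorem exists_coact2 : ∃ δ : T2 R M →ₗ[ZMod 2] (ℤ →₀ T2 R M),
    ∀ n, ∀ x ∈ gr2 R M n, δ x = Finsupp.single n x := by
  obtain ⟨δR, hR⟩ := exists_coact R.gr R.internal
  obtain ⟨δM, hM⟩ := exists_coact M.gr M.internal
  obtain ⟨δ, hδ⟩ := coact_tensor δR δM
  refine ⟨δ, fun n x hx => ?_⟩
  refine Submodule.span_induction (p := fun x _ => δ x = Finsupp.single n x) ?_ ?_ ?_ ?_ hx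
  · rintro _ ⟨i, j, r, hr, m, hm, rfl, rfl⟩
    exact hδ i j r m (hR i r hr) (hM j m hm)
  · simp
  · intro x y _ _ hx hy; rw [map_add, hx, hy, Finsupp.single_add]
  · intro c x _ hx; rw [map_smul, hx, Finsupp.smul_single]

theorem exists_coact4 : ∃ δ : T4 R M →ₗ[ZMod 2] (ℤ →₀ T4 R M),
    ∀ n, ∀ x ∈ gr4 R M n, δ x = Finsupp.single n x := by
  obtain ⟨δR, hR⟩ := exists_coact R.gr R.internal
  obtain ⟨δM, hM⟩ := exists_coact M.gr M.internal
  obtain ⟨δ, hδ⟩ := coact_tensor δR δM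
  obtain ⟨δ', hδ'⟩ := coact_tensor δM δ
  obtain ⟨δ'', hδ''⟩ := coact_tensor δR δ'
  refine ⟨δ'', fun n x hx => ?_⟩
  refine Submodule.span_induction (p := fun x _ => δ'' x = Finsupp.single n x) ?_ ?_ ?_ ?_ hx
  · rintro _ ⟨i, j, i', j', r, hr, m, hm, r', hr', m', hm', rfl, rfl⟩
    rw [hδ'' i _ r _ (hR i r hr) (hδ' j _ m _ (hM j m hm) (hδ i' j' r' m' (hR i' r' hr')
      (hM j' m' hm')))]
    congr 1; ring
  · simp
  · intro x y _ _ hx hy; rw [map_add, hx, hy, Finsupp.single_add]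
  · intro c x _ hx; rw [map_smul, hx, Finsupp.smul_single]

def π2 (n : ℤ) : T2 R M →ₗ[ZMod 2] T2 R M :=
  (Finsupp.lapply n).comp (exists_coact2 R M).choose
def π4 (n : ℤ) : T4 R M →ₗ[ZMod 2] T4 R M :=
  (Finsupp.lapply n).comp (exists_coact4 R M).choose

theorem π2_same {n : ℤ} {x : T2 R M} (hx : x ∈ gr2 R M n) : π2 R M n x = x := by
  simp [π2, (exists_coact2 R M).choose_spec n x hx]
theorem π2_ne {n m : ℤ} {x : T2 R M} (hx : x ∈ gr2 R M n) (h : n ≠ m) : π2 R M m x = 0 := by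
  simp [π2, (exists_coact2 R M).choose_spec n x hx, h]
theorem π4_same {n : ℤ} {x : T4 R M} (hx : x ∈ gr4 R M n) : π4 R M n x = x := by
  simp [π4, (exists_coact4 R M).choose_spec n x hx]
theorem π4_ne {n m : ℤ} {x : T4 R M} (hx : x ∈ gr4 R M n) (h : n ≠ m) : π4 R M m x = 0 := by
  simp [π4, (exists_coact4 R M).choose_spec n x hx, h]

theorem π2_mem (n : ℤ) (x : T2 R M) : π2 R M n x ∈ gr2 R M n := by
  refine Submodule.iSup_induction (gr2 R M) (motive := fun x => π2 R M n x ∈ gr2 R M n)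
    (iSup_gr2 R M x) ?_ (by simp) (fun x y hx hy => by rw [map_add]; exact add_mem hx hy)
  intro i x hx
  by_cases h : i = n
  · subst h; rwa [π2_same R M hx]
  · rw [π2_ne R M hx h]; exact zero_mem _

theorem π4_mem (n : ℤ) (x : T4 R M) : π4 R M n x ∈ gr4 R M n := by
  refine Submodule.iSup_induction (gr4 R M) (motive := fun x => π4 R M n x ∈ gr4 R M n)
    (iSup_gr4 R M x) ?_ (by simp) (fun x y hx hy => by rw [map_add]; exact add_mem hx hy)
  intro i x hx
  by_cases h : i = n
  · subst h; rwa [π4_same R M hx]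
  · rw [π4_ne R M hx h]; exact zero_mem _

@[simp] theorem tau4_tmul (r : R.V) (m : M.V) (r' : R.V) (m' : M.V) :
    tau4 R M (r ⊗ₜ[ZMod 2] (m ⊗ₜ[ZMod 2] (r' ⊗ₜ[ZMod 2] m'))) =
      r' ⊗ₜ[ZMod 2] (m' ⊗ₜ[ZMod 2] (r ⊗ₜ[ZMod 2] m)) := by
  simp [tau4]

@[simp] theorem d4_tmul (r : R.V) (m : M.V) (r' : R.V) (m' : M.V) :
    d4 R M (r ⊗ₜ[ZMod 2] (m ⊗ₜ[ZMod 2] (r' ⊗ₜ[ZMod 2] m'))) =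
      R.d r ⊗ₜ[ZMod 2] (m ⊗ₜ[ZMod 2] (r' ⊗ₜ[ZMod 2] m')) +
      r ⊗ₜ[ZMod 2] (M.d m ⊗ₜ[ZMod 2] (r' ⊗ₜ[ZMod 2] m')) +
      r ⊗ₜ[ZMod 2] (m ⊗ₜ[ZMod 2] (R.d r' ⊗ₜ[ZMod 2] m')) +
      r ⊗ₜ[ZMod 2] (m ⊗ₜ[ZMod 2] (r' ⊗ₜ[ZMod 2] M.d m')) := by
  simp [d4, tmul_add, add_assoc]

theorem tau4_gr {n : ℤ} {x : T4 R M} (hx : x ∈ gr4 R M n) : tau4 R M x ∈ gr4 R M n := by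
  suffices h : gr4 R M n ≤ (gr4 R M n).comap (tau4 R M) from h hx
  refine Submodule.span_le.2 ?_
  rintro _ ⟨i, j, i', j', r, hr, m, hm, r', hr', m', hm', rfl, rfl⟩
  simp only [SetLike.mem_coe, Submodule.mem_comap, tau4_tmul]
  exact tmul4_mem R M hr' hm' hr hm (by ring)

theorem d4_gr {n : ℤ} {x : T4 R M} (hx : x ∈ gr4 R M n) : d4 R M x ∈ gr4 R M (n - 1) := by
  suffices h : gr4 R M n ≤ (gr4 R M (n - 1)).comap (d4 R M) from h hx
  refine Submodule.span_le.2 ?_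
  rintro _ ⟨i, j, i', j', r, hr, m, hm, r', hr', m', hm', rfl, rfl⟩
  simp only [SetLike.mem_coe, Submodule.mem_comap, d4_tmul]
  refine add_mem (add_mem (add_mem ?_ ?_) ?_) ?_
  · exact tmul4_mem R M (R.d_gr _ _ hr) hm hr' hm' (by ring)
  · exact tmul4_mem R M hr (M.d_gr _ _ hm) hr' hm' (by ring)
  · exact tmul4_mem R M hr hm (R.d_gr _ _ hr') hm' (by ring)
  · exact tmul4_mem R M hr hm hr' (M.d_gr _ _ hm') (by ring)

theorem tau4_π4 (n : ℤ) (x : T4 R M) : π4 R M n (tau4 R M x) = tau4 R M (π4 R M n x) := by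
  refine Submodule.iSup_induction (gr4 R M)
    (motive := fun x => π4 R M n (tau4 R M x) = tau4 R M (π4 R M n x))
    (iSup_gr4 R M x) ?_ (by simp) (fun x y hx hy => by simp only [map_add, hx, hy])
  intro i x hx
  by_cases h : i = n
  · subst h; rw [π4_same R M hx, π4_same R M (tau4_gr R M hx)]
  · rw [π4_ne R M hx h, π4_ne R M (tau4_gr R M hx) h, map_zero]

/-- the product `T2 × T2 → T4` -/
def mul4 (x y : T2 R M) : T4 R M :=
  TensorProduct.assoc (ZMod 2) R.V M.V (R.V ⊗[ZMod 2] M.V) (x ⊗ₜ[ZMod 2] y)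

theorem mul4_tmul (r : R.V) (m : M.V) (y) :
    mul4 R M (r ⊗ₜ[ZMod 2] m) y = r ⊗ₜ[ZMod 2] (m ⊗ₜ[ZMod 2] y) := by
  simp [mul4]

theorem mul4_add_left (x x' y : T2 R M) :
    mul4 R M (x + x') y = mul4 R M x y + mul4 R M x' y := by
  simp [mul4, add_tmul]
theorem mul4_add_right (x y y' : T2 R M) :
    mul4 R M x (y + y') = mul4 R M x y + mul4 R M x y' := by
  simp [mul4, tmul_add]
@[simp] theorem mul4_zero_left (y : T2 R M) : mul4 R M 0 y = 0 := by simp [mul4]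
@[simp] theorem mul4_zero_right (y : T2 R M) : mul4 R M y 0 = 0 := by simp [mul4]
theorem mul4_smul_left (c : ZMod 2) (x y : T2 R M) :
    mul4 R M (c • x) y = c • mul4 R M x y := by
  simp only [mul4, ← smul_tmul', map_smul]
theorem mul4_smul_right (c : ZMod 2) (x y : T2 R M) :
    mul4 R M x (c • y) = c • mul4 R M x y := by
  simp only [mul4, tmul_smul, map_smul]
@[simp] theorem tau4_mul4 (x y : T2 R M) : tau4 R M (mul4 R M x y) = mul4 R M y x := by
  simp [mul4, tau4]

theorem mul4_gr {p q n : ℤ} {x y : T2 R M} (hx : x ∈ gr2 R M p) (hy : y ∈ gr2 R M q)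
    (h : p + q = n) : mul4 R M x y ∈ gr4 R M n := by
  subst h
  refine Submodule.span_induction (p := fun x _ => mul4 R M x y ∈ gr4 R M (p + q)) ?_ ?_ ?_ ?_ hx
  · rintro _ ⟨i, j, r, hr, m, hm, rfl, rfl⟩
    refine Submodule.span_induction
      (p := fun y _ => mul4 R M (r ⊗ₜ m) y ∈ gr4 R M (i + j + q)) ?_ ?_ ?_ ?_ hy
    · rintro _ ⟨i', j', r', hr', m', hm', rfl, rfl⟩
      rw [mul4_tmul]
      exact tmul4_mem R M hr hm hr' hm' (by ring)
    · simp
    · intro x y _ _ hx hy; rw [mul4_add_right]; exact add_mem hx hy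
    · intro c x _ hx; rw [mul4_smul_right]; exact Submodule.smul_mem _ _ hx
  · simp
  · intro x y _ _ hx hy; rw [mul4_add_left]; exact add_mem hx hy
  · intro c x _ hx; rw [mul4_smul_left]; exact Submodule.smul_mem _ _ hx

/-- `1 + τ` -/
def opt : T4 R M →ₗ[ZMod 2] T4 R M := LinearMap.id + tau4 R M

theorem opt_apply (x : T4 R M) : opt R M x = x + tau4 R M x := rfl

theorem opt_gr {n : ℤ} {x : T4 R M} (hx : x ∈ gr4 R M n) : opt R M x ∈ gr4 R M n :=
  add_mem hx (tau4_gr R M hx)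

theorem opt_π4 (n : ℤ) (x : T4 R M) : π4 R M n (opt R M x) = opt R M (π4 R M n x) := by
  simp only [opt_apply, map_add, tau4_π4]

def sq (x : T2 R M) : T4 R M := mul4 R M x x

theorem sq_add (x y : T2 R M) :
    sq R M (x + y) = sq R M x + sq R M y + opt R M (mul4 R M x y) := by
  simp only [sq, mul4_add_left, mul4_add_right, opt_apply, tau4_mul4]; abel

theorem opt_sq (x : T2 R M) : opt R M (sq R M x) = 0 := by
  simp [sq, opt_apply, z2_add_self]


end Part2

section Part3

variable {A : DGA (ZMod 2)} (R M : DGBimod A)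

theorem rel2_1 (r : R.V) (a : A.V) (m : M.V) :
    (R.actR r a) ⊗ₜ[ZMod 2] m + r ⊗ₜ[ZMod 2] (M.actL a m) ∈ rel2 R M :=
  Submodule.subset_span (Or.inl ⟨r, a, m, rfl⟩)
theorem rel2_2 (r : R.V) (a : A.V) (m : M.V) :
    (R.actL a r) ⊗ₜ[ZMod 2] m + r ⊗ₜ[ZMod 2] (M.actR m a) ∈ rel2 R M :=
  Submodule.subset_span (Or.inr ⟨r, a, m, rfl⟩)

theorem rel4_1 (r : R.V) (a : A.V) (m : M.V) (r' : R.V) (m' : M.V) :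
    (R.actR r a) ⊗ₜ[ZMod 2] (m ⊗ₜ[ZMod 2] (r' ⊗ₜ[ZMod 2] m')) +
        r ⊗ₜ[ZMod 2] ((M.actL a m) ⊗ₜ[ZMod 2] (r' ⊗ₜ[ZMod 2] m')) ∈ rel4 R M :=
  Submodule.subset_span (Or.inl (Or.inl (Or.inl ⟨r, a, m, r', m', rfl⟩)))
theorem rel4_2 (r : R.V) (a : A.V) (m : M.V) (r' : R.V) (m' : M.V) :
    (R.actL a r) ⊗ₜ[ZMod 2] (m ⊗ₜ[ZMod 2] (r' ⊗ₜ[ZMod 2] m')) +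
        r ⊗ₜ[ZMod 2] (m ⊗ₜ[ZMod 2] (r' ⊗ₜ[ZMod 2] (M.actR m' a))) ∈ rel4 R M :=
  Submodule.subset_span (Or.inl (Or.inl (Or.inr ⟨r, a, m, r', m', rfl⟩)))
theorem rel4_3 (r : R.V) (a : A.V) (m : M.V) (r' : R.V) (m' : M.V) :
    r ⊗ₜ[ZMod 2] ((M.actR m a) ⊗ₜ[ZMod 2] (r' ⊗ₜ[ZMod 2] m')) +
        r ⊗ₜ[ZMod 2] (m ⊗ₜ[ZMod 2] ((R.actL a r') ⊗ₜ[ZMod 2] m')) ∈ rel4 R M :=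
  Submodule.subset_span (Or.inl (Or.inr ⟨r, a, m, r', m', rfl⟩))
theorem rel4_4 (r : R.V) (a : A.V) (m : M.V) (r' : R.V) (m' : M.V) :
    r ⊗ₜ[ZMod 2] (m ⊗ₜ[ZMod 2] ((R.actR r' a) ⊗ₜ[ZMod 2] m')) +
        r ⊗ₜ[ZMod 2] (m ⊗ₜ[ZMod 2] (r' ⊗ₜ[ZMod 2] (M.actL a m'))) ∈ rel4 R M :=
  Submodule.subset_span (Or.inr ⟨r, a, m, r', m', rfl⟩)

theorem rel4_le {S : Submodule (ZMod 2) (T4 R M)}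
    (h1 : ∀ r a m r' m', (R.actR r a) ⊗ₜ[ZMod 2] (m ⊗ₜ[ZMod 2] (r' ⊗ₜ[ZMod 2] m')) +
        r ⊗ₜ[ZMod 2] ((M.actL a m) ⊗ₜ[ZMod 2] (r' ⊗ₜ[ZMod 2] m')) ∈ S)
    (h2 : ∀ r a m r' m', (R.actL a r) ⊗ₜ[ZMod 2] (m ⊗ₜ[ZMod 2] (r' ⊗ₜ[ZMod 2] m')) +
        r ⊗ₜ[ZMod 2] (m ⊗ₜ[ZMod 2] (r' ⊗ₜ[ZMod 2] (M.actR m' a))) ∈ S)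
    (h3 : ∀ r a m r' m', r ⊗ₜ[ZMod 2] ((M.actR m a) ⊗ₜ[ZMod 2] (r' ⊗ₜ[ZMod 2] m')) +
        r ⊗ₜ[ZMod 2] (m ⊗ₜ[ZMod 2] ((R.actL a r') ⊗ₜ[ZMod 2] m')) ∈ S)
    (h4 : ∀ r a m r' m', r ⊗ₜ[ZMod 2] (m ⊗ₜ[ZMod 2] ((R.actR r' a) ⊗ₜ[ZMod 2] m')) +
        r ⊗ₜ[ZMod 2] (m ⊗ₜ[ZMod 2] (r' ⊗ₜ[ZMod 2] (M.actL a m'))) ∈ S) :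
    rel4 R M ≤ S := by
  refine Submodule.span_le.2 ?_
  rintro _ (((⟨r, a, m, r', m', rfl⟩ | ⟨r, a, m, r', m', rfl⟩) | ⟨r, a, m, r', m', rfl⟩) |
    ⟨r, a, m, r', m', rfl⟩)
  · exact h1 _ _ _ _ _
  · exact h2 _ _ _ _ _
  · exact h3 _ _ _ _ _
  · exact h4 _ _ _ _ _

theorem tau4_rel {x : T4 R M} (hx : x ∈ rel4 R M) : tau4 R M x ∈ rel4 R M := by
  suffices h : rel4 R M ≤ (rel4 R M).comap (tau4 R M) from h hx
  apply rel4_le <;> intro r a m r' m' <;>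
    simp only [Submodule.mem_comap, map_add, tau4_tmul]
  · exact rel4_4 R M _ _ _ _ _
  · rw [add_comm]; exact rel4_3 R M _ _ _ _ _
  · rw [add_comm]; exact rel4_2 R M _ _ _ _ _
  · exact rel4_1 R M _ _ _ _ _

theorem opt_rel {x : T4 R M} (hx : x ∈ rel4 R M) : opt R M x ∈ rel4 R M :=
  add_mem hx (tau4_rel R M hx)

theorem negOne_smul {V : Type} [AddCommGroup V] [Module (ZMod 2) V] (i : ℤ) (x : V) :
    (Int.negOnePow i : ℤ) • x = x := by
  rcases Int.even_or_odd i with h | h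
  · simp [Int.negOnePow_even i h]
  · simp [Int.negOnePow_odd i h, z2_neg]

theorem leibL (a : A.V) (m : M.V) : M.d (M.actL a m) = M.actL (A.d a) m + M.actL a (M.d m) := by
  induction a using hom_induction A.internal with
  | h0 => simp
  | h2 x y hx hy => simp only [map_add, LinearMap.add_apply, hx, hy]; abel
  | h1 i a ha => rw [M.leibnizL i a ha, negOne_smul]

theorem leibR (m : M.V) (a : A.V) : M.d (M.actR m a) = M.actR (M.d m) a + M.actR m (A.d a) := by
  induction m using hom_induction M.internal with
  | h0 => simp
  | h2 x y hx hy => simp only [map_add, LinearMap.add_apply, hx, hy]; abel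
  | h1 i m hm => rw [M.leibnizR i m hm, negOne_smul]

theorem d4_rel {x : T4 R M} (hx : x ∈ rel4 R M) : d4 R M x ∈ rel4 R M := by
  suffices h : rel4 R M ≤ (rel4 R M).comap (d4 R M) from h hx
  apply rel4_le <;> intro r a m r' m' <;>
    simp only [Submodule.mem_comap, map_add, d4_tmul, leibL, leibR, tmul_add, add_tmul]
  · have := add_mem (add_mem (add_mem (add_mem (rel4_1 R M (R.d r) a m r' m')
      (rel4_1 R M r (A.d a) m r' m')) (rel4_1 R M r a (M.d m) r' m'))
      (rel4_1 R M r a m (R.d r') m')) (rel4_1 R M r a m r' (M.d m'))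
    convert this using 1; abel
  · have := add_mem (add_mem (add_mem (add_mem (rel4_2 R M (R.d r) a m r' m')
      (rel4_2 R M r (A.d a) m r' m')) (rel4_2 R M r a (M.d m) r' m'))
      (rel4_2 R M r a m (R.d r') m')) (rel4_2 R M r a m r' (M.d m'))
    convert this using 1; abel
  · have := add_mem (add_mem (add_mem (add_mem (rel4_3 R M (R.d r) a m r' m')
      (rel4_3 R M r (A.d a) m r' m')) (rel4_3 R M r a (M.d m) r' m'))
      (rel4_3 R M r a m (R.d r') m')) (rel4_3 R M r a m r' (M.d m'))
    convert this using 1; abel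
  · have := add_mem (add_mem (add_mem (add_mem (rel4_4 R M (R.d r) a m r' m')
      (rel4_4 R M r (A.d a) m r' m')) (rel4_4 R M r a (M.d m) r' m'))
      (rel4_4 R M r a m (R.d r') m')) (rel4_4 R M r a m r' (M.d m'))
    convert this using 1; abel

theorem π2_aux {n q : ℤ} {z : T2 R M} (h : z ∈ gr2 R M n) (h' : z ∈ rel2 R M) :
    π2 R M q z ∈ rel2 R M := by
  by_cases e : n = q
  · subst e; rwa [π2_same R M h]
  · rw [π2_ne R M h e]; exact zero_mem _

theorem π4_aux {n q : ℤ} {z : T4 R M} (h : z ∈ gr4 R M n) (h' : z ∈ rel4 R M) :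
    π4 R M q z ∈ rel4 R M := by
  by_cases e : n = q
  · subst e; rwa [π4_same R M h]
  · rw [π4_ne R M h e]; exact zero_mem _

theorem π2_rel (n : ℤ) {x : T2 R M} (hx : x ∈ rel2 R M) : π2 R M n x ∈ rel2 R M := by
  suffices h : rel2 R M ≤ (rel2 R M).comap (π2 R M n) from h hx
  have lin : ∀ (f : R.V → A.V → M.V → T2 R M),
      (∀ x y a m, f (x + y) a m = f x a m + f y a m) →
      (∀ x a b m, f x (a + b) m = f x a m + f x b m) →
      (∀ x a m m', f x a (m + m') = f x a m + f x a m') →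
      (∀ i j l, ∀ r ∈ R.gr i, ∀ a ∈ A.gr j, ∀ m ∈ M.gr l,
        π2 R M n (f r a m) ∈ rel2 R M) →
      ∀ r a m, π2 R M n (f r a m) ∈ rel2 R M := by
    intro f f1 f2 f3 H r a m
    have z1 : ∀ a m, f 0 a m = 0 := fun a m => by simpa using f1 0 0 a m
    have z2 : ∀ r m, f r 0 m = 0 := fun r m => by simpa using f2 r 0 0 m
    have z3 : ∀ r a, f r a 0 = 0 := fun r a => by simpa using f3 r a 0 0
    induction r using hom_induction R.internal with
    | h0 => simp [z1]
    | h2 x y hx hy => rw [f1, map_add]; exact add_mem hx hy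
    | h1 i r hr =>
    induction a using hom_induction A.internal with
    | h0 => simp [z2]
    | h2 x y hx hy => rw [f2, map_add]; exact add_mem hx hy
    | h1 j a ha =>
    induction m using hom_induction M.internal with
    | h0 => simp [z3]
    | h2 x y hx hy => rw [f3, map_add]; exact add_mem hx hy
    | h1 l m hm => exact H i j l r hr a ha m hm
  refine Submodule.span_le.2 ?_
  rintro _ (⟨r, a, m, rfl⟩ | ⟨r, a, m, rfl⟩)
  · refine lin (fun r a m => (R.actR r a) ⊗ₜ[ZMod 2] m + r ⊗ₜ[ZMod 2] (M.actL a m))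
      ?_ ?_ ?_ ?_ r a m
    · intros; simp only [map_add, LinearMap.add_apply, tmul_add, add_tmul]; abel
    · intros; simp only [map_add, LinearMap.add_apply, tmul_add, add_tmul]; abel
    · intros; simp only [map_add, tmul_add]; abel
    · intro i j l r hr a ha m hm
      exact π2_aux R M (add_mem (tmul2_mem R M (R.actR_gr _ _ _ hr _ ha) hm rfl)
        (tmul2_mem R M hr (M.actL_gr _ _ _ ha _ hm) (by ring))) (rel2_1 R M r a m)
  · refine lin (fun r a m => (R.actL a r) ⊗ₜ[ZMod 2] m + r ⊗ₜ[ZMod 2] (M.actR m a))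
      ?_ ?_ ?_ ?_ r a m
    · intros; simp only [map_add, tmul_add, add_tmul]; abel
    · intros; simp only [map_add, LinearMap.add_apply, tmul_add, add_tmul]; abel
    · intros; simp only [map_add, LinearMap.add_apply, tmul_add]; abel
    · intro i j l r hr a ha m hm
      exact π2_aux R M (add_mem (tmul2_mem R M (R.actL_gr _ _ _ ha _ hr) hm rfl)
        (tmul2_mem R M hr (M.actR_gr _ _ _ hm _ ha) (by ring))) (rel2_2 R M r a m)

theorem π4_lin (n : ℤ) (f : R.V → A.V → M.V → R.V → M.V → T4 R M)
      (f1 : ∀ x y a m r' m', f (x + y) a m r' m' = f x a m r' m' + f y a m r' m')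
      (f2 : ∀ x a b m r' m', f x (a + b) m r' m' = f x a m r' m' + f x b m r' m')
      (f3 : ∀ x a m n r' m', f x a (m + n) r' m' = f x a m r' m' + f x a n r' m')
      (f4 : ∀ x a m r' s' m', f x a m (r' + s') m' = f x a m r' m' + f x a m s' m')
      (f5 : ∀ x a m r' m' n', f x a m r' (m' + n') = f x a m r' m' + f x a m r' n')
      (H : ∀ i j l i' l', ∀ r ∈ R.gr i, ∀ a ∈ A.gr j, ∀ m ∈ M.gr l, ∀ r' ∈ R.gr i',
        ∀ m' ∈ M.gr l', f r a m r' m' ∈ gr4 R M (i + j + l + i' + l'))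
      (H' : ∀ r a m r' m', f r a m r' m' ∈ rel4 R M)
      (r a m r' m') : π4 R M n (f r a m r' m') ∈ rel4 R M := by
  have z1 : ∀ a m r' m', f 0 a m r' m' = 0 := fun a m r' m' => by simpa using f1 0 0 a m r' m'
  have z2 : ∀ r m r' m', f r 0 m r' m' = 0 := fun r m r' m' => by simpa using f2 r 0 0 m r' m'
  have z3 : ∀ r a r' m', f r a 0 r' m' = 0 := fun r a r' m' => by simpa using f3 r a 0 0 r' m'
  have z4 : ∀ r a m m', f r a m 0 m' = 0 := fun r a m m' => by simpa using f4 r a m 0 0 m'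
  have z5 : ∀ r a m r', f r a m r' 0 = 0 := fun r a m r' => by simpa using f5 r a m r' 0 0
  induction r using hom_induction R.internal with
  | h0 => simp [z1]
  | h2 x y hx hy => rw [f1, map_add]; exact add_mem hx hy
  | h1 i r hr =>
  induction a using hom_induction A.internal with
  | h0 => simp [z2]
  | h2 x y hx hy => rw [f2, map_add]; exact add_mem hx hy
  | h1 j a ha =>
  induction m using hom_induction M.internal with
  | h0 => simp [z3]
  | h2 x y hx hy => rw [f3, map_add]; exact add_mem hx hy
  | h1 l m hm =>
  induction r' using hom_induction R.internal with
  | h0 => simp [z4]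
  | h2 x y hx hy => rw [f4, map_add]; exact add_mem hx hy
  | h1 i' r' hr' =>
  induction m' using hom_induction M.internal with
  | h0 => simp [z5]
  | h2 x y hx hy => rw [f5, map_add]; exact add_mem hx hy
  | h1 l' m' hm' =>
  exact π4_aux R M (H i j l i' l' r hr a ha m hm r' hr' m' hm') (H' _ _ _ _ _)

theorem π4_rel (n : ℤ) {x : T4 R M} (hx : x ∈ rel4 R M) : π4 R M n x ∈ rel4 R M := by
  suffices h : rel4 R M ≤ (rel4 R M).comap (π4 R M n) from h hx
  apply rel4_le
  · refine π4_lin R M n (fun r a m r' m' => _) ?_ ?_ ?_ ?_ ?_ ?_ (rel4_1 R M)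
    iterate 5
      intros; simp only [map_add, LinearMap.add_apply, tmul_add, add_tmul]; abel
    intro i j l i' l' r hr a ha m hm r' hr' m' hm'
    exact add_mem (tmul4_mem R M (R.actR_gr _ _ _ hr _ ha) hm hr' hm' (by ring))
      (tmul4_mem R M hr (M.actL_gr _ _ _ ha _ hm) hr' hm' (by ring))
  · refine π4_lin R M n (fun r a m r' m' => _) ?_ ?_ ?_ ?_ ?_ ?_ (rel4_2 R M)
    iterate 5
      intros; simp only [map_add, LinearMap.add_apply, tmul_add, add_tmul]; abel
    intro i j l i' l' r hr a ha m hm r' hr' m' hm'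
    exact add_mem (tmul4_mem R M (R.actL_gr _ _ _ ha _ hr) hm hr' hm' (by ring))
      (tmul4_mem R M hr hm hr' (M.actR_gr _ _ _ hm' _ ha) (by ring))
  · refine π4_lin R M n (fun r a m r' m' => _) ?_ ?_ ?_ ?_ ?_ ?_ (rel4_3 R M)
    iterate 5
      intros; simp only [map_add, LinearMap.add_apply, tmul_add, add_tmul]; abel
    intro i j l i' l' r hr a ha m hm r' hr' m' hm'
    exact add_mem (tmul4_mem R M hr (M.actR_gr _ _ _ hm _ ha) hr' hm' (by ring))
      (tmul4_mem R M hr hm (R.actL_gr _ _ _ ha _ hr') hm' (by ring))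
  · refine π4_lin R M n (fun r a m r' m' => _) ?_ ?_ ?_ ?_ ?_ ?_ (rel4_4 R M)
    iterate 5
      intros; simp only [map_add, LinearMap.add_apply, tmul_add, add_tmul]; abel
    intro i j l i' l' r hr a ha m hm r' hr' m' hm'
    exact add_mem (tmul4_mem R M hr hm (R.actR_gr _ _ _ hr' _ ha) hm' (by ring))
      (tmul4_mem R M hr hm hr' (M.actL_gr _ _ _ ha _ hm') (by ring))

/-- `rel4 + Im(1+τ)` -/
def relopt : Submodule (ZMod 2) (T4 R M) := rel4 R M ⊔ LinearMap.range (opt R M)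

theorem relopt_rel {x : T4 R M} (hx : x ∈ rel4 R M) : x ∈ relopt R M :=
  Submodule.mem_sup_left hx
theorem relopt_opt (x : T4 R M) : opt R M x ∈ relopt R M :=
  Submodule.mem_sup_right ⟨x, rfl⟩

/-- `ξ ↦ ξ⊗ξ` is additive modulo `Im(1+τ)`. -/
def sqHom : T2 R M →+ T4 R M ⧸ relopt R M where
  toFun x := Submodule.Quotient.mk (sq R M x)
  map_zero' := by simp [sq]
  map_add' x y := by
    rw [sq_add, Submodule.Quotient.mk_add, Submodule.Quotient.mk_add,
      (Submodule.Quotient.mk_eq_zero _).2 (relopt_opt R M _), add_zero]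

theorem sq_rel {x : T2 R M} (hx : x ∈ rel2 R M) : sq R M x ∈ relopt R M := by
  have key : ∀ x y : T2 R M, sq R M x + sq R M y ∈ rel4 R M → sq R M (x + y) ∈ relopt R M := by
    intro x y h
    rw [sq_add]
    exact add_mem (relopt_rel R M h) (relopt_opt R M _)
  refine Submodule.span_induction (p := fun x _ => sq R M x ∈ relopt R M) ?_ ?_ ?_ ?_ hx
  · rintro _ (⟨r, a, m, rfl⟩ | ⟨r, a, m, rfl⟩)
    · apply key
      simp only [sq, mul4_tmul]
      have := add_mem (rel4_1 R M r a m (R.actR r a) m) (rel4_4 R M r a (M.actL a m) r m)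
      convert this using 1
      rw [add_assoc, ← add_assoc (r ⊗ₜ[ZMod 2] _), z2_add_self, zero_add]
    · apply key
      simp only [sq, mul4_tmul]
      have := add_mem (rel4_2 R M r a m (R.actL a r) m) (rel4_3 R M r a m r (M.actR m a))
      convert this using 1
      rw [add_assoc, add_comm (r ⊗ₜ[ZMod 2] (M.actR m a ⊗ₜ[ZMod 2] _)),
        ← add_assoc (r ⊗ₜ[ZMod 2] _), z2_add_self, zero_add]
  · simp [sq]
  · intro x y _ _ hx hy
    rw [sq_add]; exact add_mem (add_mem hx hy) (relopt_opt R M _)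
  · intro c x _ hx
    simp only [sq, mul4_smul_left, mul4_smul_right]
    exact Submodule.smul_mem _ _ (Submodule.smul_mem _ _ hx)


end Part3

section Part4

variable {A : DGA (ZMod 2)}

/-- `C` is free as an (ungraded) bimodule on the family `g`. -/
structure FreeB (C : DGBimod A) : Type 1 where
  I : Type
  g : I → C.V
  e : (I →₀ A.V ⊗[ZMod 2] A.V) ≃ₗ[ZMod 2] C.V
  he : ∀ i a b, e (Finsupp.single i (a ⊗ₜ[ZMod 2] b)) = C.actR (C.actL a (g i)) b

section Cell
variable (C : DGBimod A) (Fil : ℕ → Submodule (ZMod 2) C.V)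

theorem sandwichT_tmul (m : C.V) (a b : A.V) :
    sandwichT C m (a ⊗ₜ[ZMod 2] b) = C.actR (C.actL a m) b := by
  simp [sandwichT, sandwich]

theorem cell_free (h : IsCellBimod C) : Nonempty (FreeB C) := by
  classical
  obtain ⟨Fil, h0, hmono, htop, -, hL, hR, hstep⟩ := h
  choose I g deg hg hd hgr hspan hind using hstep
  let e : ((Σ n, I n) →₀ A.V ⊗[ZMod 2] A.V) →ₗ[ZMod 2] C.V :=
    Finsupp.lsum (ZMod 2) (fun i : (Σ n, I n) => sandwichT C (g i.1 i.2))
  have hsand : ∀ n (j : I n) c, sandwichT C (g n j) c ∈ Fil (n + 1) := by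
    intro n j c
    induction c using TensorProduct.induction_on with
    | zero => simp
    | add x y hx hy => rw [map_add]; exact add_mem hx hy
    | tmul a b =>
      rw [sandwichT_tmul]
      exact hR _ _ _ (hL _ _ _ (hg n j))
  have hes : ∀ i c, e (Finsupp.single i c) = sandwichT C (g i.1 i.2) c := by
    intro i c; simp [e]
  have hsurj : ∀ n, Fil n ≤ LinearMap.range e := by
    intro n
    induction n with
    | zero => rw [h0]; exact bot_le
    | succ n ih =>
      refine (hspan n).trans (sup_le ih (iSup_le fun i => ?_))
      rintro _ ⟨c, rfl⟩
      exact ⟨Finsupp.single ⟨n, i⟩ c, hes _ _⟩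
  have hinj : ∀ n, ∀ c, e c = 0 → (∀ i ∈ c.support, i.1 < n) → c = 0 := by
    intro n
    induction n with
    | zero =>
      intro c _ hc
      rw [← Finsupp.support_eq_empty]
      exact Finset.eq_empty_of_forall_notMem (fun i hi => absurd (hc i hi) (by simp))
    | succ n ih =>
      intro c hec hc
      apply ih c hec
      intro i hi
      by_contra hlt
      have hin : i.1 = n := by have := hc i hi; omega
      obtain ⟨n', j⟩ := i
      obtain rfl : n' = n := hin
      let u : Finset (I n') := c.support.preimage (Sigma.mk n') sigma_mk_injective.injOn
      have hju : j ∈ u := by simpa [u] using hi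
      have hsum : (∑ i ∈ u, sandwichT C (g n' i) (c ⟨n', i⟩)) ∈ Fil n' := by
        have h1 : e c = ∑ i ∈ c.support, sandwichT C (g i.1 i.2) (c i) := by
          simp [e, Finsupp.sum]
        rw [hec, ← Finset.sum_filter_add_sum_filter_not c.support (fun i => i.1 = n')] at h1
        have h2 : ∑ i ∈ c.support.filter (fun i => i.1 = n'), sandwichT C (g i.1 i.2) (c i) =
            ∑ i ∈ u, sandwichT C (g n' i) (c ⟨n', i⟩) := by
          symm
          refine Finset.sum_bij (fun i _ => (⟨n', i⟩ : Σ n, I n)) ?_ ?_ ?_ ?_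
          · intro a ha; simpa [u] using ha
          · intro a _ b _ hab; exact sigma_mk_injective hab
          · rintro ⟨n'', b⟩ hb
            simp only [Finset.mem_filter] at hb
            obtain ⟨hb, rfl⟩ := hb
            exact ⟨b, by simpa [u] using hb, rfl⟩
          · intro a _; rfl
        rw [h2] at h1
        rw [eq_neg_of_add_eq_zero_left h1.symm]
        refine neg_mem (Submodule.sum_mem _ fun i hi => ?_)
        simp only [Finset.mem_filter] at hi
        have h3 := hc i hi.1
        exact hmono (by omega : i.1 + 1 ≤ n') (hsand _ _ _)
      have := hind n' u _ hsum j hju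
      simp [this] at hi
  have hbij : Function.Bijective e := by
    constructor
    · rw [← LinearMap.ker_eq_bot, LinearMap.ker_eq_bot']
      intro c hc
      refine hinj (c.support.sup (fun i => i.1) + 1) c hc fun i hi => ?_
      exact Nat.lt_succ_of_le (Finset.le_sup (f := fun i : (Σ n, I n) => i.1) hi)
    · rw [← LinearMap.range_eq_top, eq_top_iff, ← htop]
      exact iSup_le hsurj
  refine ⟨⟨Σ n, I n, fun i => g i.1 i.2, LinearEquiv.ofBijective e hbij, ?_⟩⟩
  intro i a b
  rw [LinearEquiv.ofBijective_apply, hes, sandwichT_tmul]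

end Cell

section Free
variable {C : DGBimod A} (F : FreeB C) (M : DGBimod A)

theorem FreeB.ind {P : C.V → Prop} (h0 : P 0) (hadd : ∀ x y, P x → P y → P (x + y))
    (h : ∀ i a b, P (C.actR (C.actL a (F.g i)) b)) (c : C.V) : P c := by
  obtain ⟨f, rfl⟩ := F.e.surjective c
  induction f using Finsupp.induction_linear with
  | zero => simpa using h0
  | add f g hf hg => rw [map_add]; exact hadd _ _ hf hg
  | single i t =>
    induction t using TensorProduct.induction_on with
    | zero => simpa using h0
    | add x y hx hy => rw [Finsupp.single_add, map_add]; exact hadd _ _ hx hy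
    | tmul a b => rw [F.he]; exact h i a b

abbrev FreeB.X := F.I →₀ M.V

/-- right action on `X` -/
def FreeB.xr (a : A.V) : F.X M →ₗ[ZMod 2] F.X M := Finsupp.mapRange.linearMap (M.actR.flip a)

theorem FreeB.xr_single (a : A.V) (i m) :
    F.xr M a (Finsupp.single i m) = Finsupp.single i (M.actR m a) := by
  simp [FreeB.xr]

def FreeB.xact : A.V →ₗ[ZMod 2] F.X M →ₗ[ZMod 2] F.X M where
  toFun := F.xr M
  map_add' a b := by
    apply Finsupp.lhom_ext
    intro i m
    simp [FreeB.xr_single]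
  map_smul' c a := by
    apply Finsupp.lhom_ext
    intro i m
    simp [FreeB.xr_single]

theorem FreeB.xact_single (a : A.V) (i m) :
    F.xact M a (Finsupp.single i m) = Finsupp.single i (M.actR m a) := F.xr_single M a i m

theorem FreeB.xact_one (x) : F.xact M A.one x = x := by
  induction x using Finsupp.induction_linear with
  | zero => simp
  | add f g hf hg => rw [map_add, hf, hg]
  | single i t => rw [F.xact_single, M.actR_one]

theorem FreeB.xact_mul (a b x) : F.xact M (A.mul a b) x = F.xact M b (F.xact M a x) := by
  induction x using Finsupp.induction_linear with
  | zero => simp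
  | add f g hf hg => simp only [map_add, hf, hg]
  | single i t => simp only [F.xact_single, M.actR_mul]

/-- `θ (a g_i b ⊗ m) = a ⊗ (b m)_i` -/
def FreeB.θ1 (i : F.I) : A.V →ₗ[ZMod 2] A.V →ₗ[ZMod 2] M.V →ₗ[ZMod 2] (A.V ⊗[ZMod 2] F.X M) :=
  LinearMap.mk₂ (ZMod 2)
    (fun a b => (TensorProduct.mk (ZMod 2) A.V (F.X M) a).comp
      ((Finsupp.lsingle i).comp (M.actL b)))
    (fun a a' b => by ext m; simp)
    (fun c a b => by ext m; simp [smul_tmul'])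
    (fun a b b' => by ext m; simp [tmul_add])
    (fun c a b => by ext m; simp [-Finsupp.smul_single, ← Finsupp.smul_single])

def FreeB.θ : T2 C M →ₗ[ZMod 2] (A.V ⊗[ZMod 2] F.X M) :=
  TensorProduct.lift ((Finsupp.lsum (ZMod 2) (fun i => TensorProduct.lift (F.θ1 M i))).comp
    F.e.symm.toLinearMap)

theorem FreeB.θ_apply (i a b m) :
    F.θ M ((C.actR (C.actL a (F.g i)) b) ⊗ₜ[ZMod 2] m) =
      a ⊗ₜ[ZMod 2] Finsupp.single i (M.actL b m) := by
  have : F.e.symm (C.actR (C.actL a (F.g i)) b) = Finsupp.single i (a ⊗ₜ b) := by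
    rw [LinearEquiv.symm_apply_eq, F.he]
  simp [FreeB.θ, this, FreeB.θ1]

theorem FreeB.θ_bal (r : C.V) (a : A.V) (m : M.V) :
    F.θ M ((C.actR r a) ⊗ₜ[ZMod 2] m) = F.θ M (r ⊗ₜ[ZMod 2] (M.actL a m)) := by
  refine F.ind (P := fun r => F.θ M ((C.actR r a) ⊗ₜ[ZMod 2] m) =
    F.θ M (r ⊗ₜ[ZMod 2] (M.actL a m))) ?_ ?_ ?_ r
  · simp
  · intro x y hx hy; simp only [map_add, LinearMap.add_apply, add_tmul, hx, hy]
  · intro i a b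
    rw [C.actR_mul, F.θ_apply, F.θ_apply, M.actL_mul]

def FreeB.lact (a : A.V) : (A.V ⊗[ZMod 2] F.X M) →ₗ[ZMod 2] (A.V ⊗[ZMod 2] F.X M) :=
  TensorProduct.map (A.mul a) LinearMap.id
def FreeB.ract (a : A.V) : (A.V ⊗[ZMod 2] F.X M) →ₗ[ZMod 2] (A.V ⊗[ZMod 2] F.X M) :=
  TensorProduct.map LinearMap.id (F.xact M a)

theorem FreeB.θ_l (r : C.V) (a : A.V) (m : M.V) :
    F.θ M ((C.actL a r) ⊗ₜ[ZMod 2] m) = F.lact M a (F.θ M (r ⊗ₜ[ZMod 2] m)) := by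
  refine F.ind (P := fun r => F.θ M ((C.actL a r) ⊗ₜ[ZMod 2] m) =
    F.lact M a (F.θ M (r ⊗ₜ[ZMod 2] m))) ?_ ?_ ?_ r
  · simp
  · intro x y hx hy; simp only [map_add, add_tmul, hx, hy]
  · intro i a' b
    rw [← C.actLR, ← C.actL_mul, F.θ_apply, F.θ_apply]
    simp [FreeB.lact]

theorem FreeB.θ_r (r : C.V) (a : A.V) (m : M.V) :
    F.θ M (r ⊗ₜ[ZMod 2] (M.actR m a)) = F.ract M a (F.θ M (r ⊗ₜ[ZMod 2] m)) := by
  refine F.ind (P := fun r => F.θ M (r ⊗ₜ[ZMod 2] (M.actR m a)) =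
    F.ract M a (F.θ M (r ⊗ₜ[ZMod 2] m))) ?_ ?_ ?_ r
  · simp
  · intro x y hx hy; simp only [map_add, add_tmul, hx, hy]
  · intro i a' b
    rw [F.θ_apply, F.θ_apply]
    simp [FreeB.ract, FreeB.xact_single, M.actLR]

/-- `(a ⊗ x) ⊗ (a' ⊗ x') ↦ x a' ⊗ x' a` -/
def FreeB.ω : (A.V ⊗[ZMod 2] F.X M) ⊗[ZMod 2] (A.V ⊗[ZMod 2] F.X M) →ₗ[ZMod 2]
    (F.X M ⊗[ZMod 2] F.X M) :=
  (TensorProduct.map (TensorProduct.lift (F.xact M).flip) (TensorProduct.lift (F.xact M))).comp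
  ((TensorProduct.tensorTensorTensorComm (ZMod 2) (F.X M) A.V A.V (F.X M)).toLinearMap.comp
    (TensorProduct.map (TensorProduct.comm (ZMod 2) A.V (F.X M)).toLinearMap LinearMap.id))

theorem FreeB.ω_apply (a x a' x') : F.ω M ((a ⊗ₜ[ZMod 2] x) ⊗ₜ[ZMod 2] (a' ⊗ₜ[ZMod 2] x')) =
    F.xact M a' x ⊗ₜ[ZMod 2] F.xact M a x' := by
  simp [FreeB.ω]

end Free

end Part4

section Part5

variable {A : DGA (ZMod 2)}
section Free
variable {C : DGBimod A} (F : FreeB C) (M : DGBimod A)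

theorem FreeB.ω_l (a s t) :
    F.ω M (F.lact M a s ⊗ₜ[ZMod 2] t) = F.ω M (s ⊗ₜ[ZMod 2] F.ract M a t) := by
  induction s using TensorProduct.induction_on with
  | zero => simp
  | add x y hx hy => simp only [map_add, add_tmul, hx, hy]
  | tmul b x =>
  induction t using TensorProduct.induction_on with
  | zero => simp
  | add x y hx hy => simp only [map_add, tmul_add, hx, hy]
  | tmul b' x' =>
    simp only [FreeB.lact, FreeB.ract, map_tmul, F.ω_apply, F.xact_mul, LinearMap.id_apply]

theorem FreeB.ω_r (a s t) :
    F.ω M (F.ract M a s ⊗ₜ[ZMod 2] t) = F.ω M (s ⊗ₜ[ZMod 2] F.lact M a t) := by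
  induction s using TensorProduct.induction_on with
  | zero => simp
  | add x y hx hy => simp only [map_add, add_tmul, hx, hy]
  | tmul b x =>
  induction t using TensorProduct.induction_on with
  | zero => simp
  | add x y hx hy => simp only [map_add, tmul_add, hx, hy]
  | tmul b' x' =>
    simp only [FreeB.lact, FreeB.ract, map_tmul, F.ω_apply, F.xact_mul, LinearMap.id_apply]

theorem FreeB.ω_comm (s t) :
    TensorProduct.comm (ZMod 2) _ _ (F.ω M (s ⊗ₜ[ZMod 2] t)) = F.ω M (t ⊗ₜ[ZMod 2] s) := by
  induction s using TensorProduct.induction_on with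
  | zero => simp
  | add x y hx hy => simp only [map_add, tmul_add, add_tmul, hx, hy]
  | tmul b x =>
  induction t using TensorProduct.induction_on with
  | zero => simp
  | add x y hx hy => simp only [map_add, tmul_add, add_tmul, hx, hy]
  | tmul b' x' =>
    simp only [F.ω_apply, comm_tmul]

def FreeB.ψ : T4 C M →ₗ[ZMod 2] (F.X M ⊗[ZMod 2] F.X M) :=
  (F.ω M).comp ((TensorProduct.map (F.θ M) (F.θ M)).comp
    (TensorProduct.assoc (ZMod 2) C.V M.V (C.V ⊗[ZMod 2] M.V)).symm.toLinearMap)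

theorem FreeB.ψ_mul4 (x y) : F.ψ M (mul4 C M x y) = F.ω M (F.θ M x ⊗ₜ[ZMod 2] F.θ M y) := by
  simp [FreeB.ψ, mul4]

theorem FreeB.ψ_rel {x} (hx : x ∈ rel4 C M) : F.ψ M x = 0 := by
  suffices h : rel4 C M ≤ LinearMap.ker (F.ψ M) from h hx
  apply rel4_le <;> intro r a m r' m' <;>
    simp only [LinearMap.mem_ker, map_add, ← mul4_tmul, F.ψ_mul4, F.θ_bal, F.θ_l, F.θ_r, F.ω_l,
      F.ω_r, z2_add_self]

theorem FreeB.ψ_tau (x) : F.ψ M (tau4 C M x) = TensorProduct.comm (ZMod 2) _ _ (F.ψ M x) := by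
  refine T4_pure_induction C M (P := fun x => F.ψ M (tau4 C M x) =
    TensorProduct.comm (ZMod 2) _ _ (F.ψ M x)) ?_ ?_ ?_ x
  · simp
  · intro x y hx hy; simp only [map_add, hx, hy]
  · intro r m r' m'
    rw [← mul4_tmul, tau4_mul4, F.ψ_mul4, F.ψ_mul4, F.ω_comm]

def FreeB.ι : F.X M →ₗ[ZMod 2] T2 C M :=
  Finsupp.lsum (ZMod 2) (fun i => TensorProduct.mk (ZMod 2) C.V M.V (F.g i))

theorem FreeB.ι_single (i m) : F.ι M (Finsupp.single i m) = F.g i ⊗ₜ[ZMod 2] m := by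
  simp [FreeB.ι]

theorem FreeB.θι (x) : F.θ M (F.ι M x) = A.one ⊗ₜ[ZMod 2] x := by
  induction x using Finsupp.induction_linear with
  | zero => simp
  | add f g hf hg => simp only [map_add, hf, hg, tmul_add]
  | single i m =>
    rw [F.ι_single]
    have := F.θ_apply M i A.one A.one m
    rwa [C.actR_one, C.actL_one, M.actL_one] at this

theorem FreeB.ψι (x y) : F.ψ M (mul4 C M (F.ι M x) (F.ι M y)) = x ⊗ₜ[ZMod 2] y := by
  rw [F.ψ_mul4, F.θι, F.θι, F.ω_apply, F.xact_one, F.xact_one]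

def FreeB.ιι : (F.X M ⊗[ZMod 2] F.X M) →ₗ[ZMod 2] T4 C M :=
  (TensorProduct.assoc (ZMod 2) C.V M.V (C.V ⊗[ZMod 2] M.V)).toLinearMap.comp
    (TensorProduct.map (F.ι M) (F.ι M))

theorem FreeB.ιι_tmul (x y) : F.ιι M (x ⊗ₜ[ZMod 2] y) = mul4 C M (F.ι M x) (F.ι M y) := by
  simp [FreeB.ιι, mul4]

theorem FreeB.ιι_comm (t) :
    F.ιι M (TensorProduct.comm (ZMod 2) _ _ t) = tau4 C M (F.ιι M t) := by
  induction t using TensorProduct.induction_on with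
  | zero => simp
  | add x y hx hy => simp only [map_add, hx, hy]
  | tmul x y => rw [comm_tmul, F.ιι_tmul, F.ιι_tmul, tau4_mul4]

theorem FreeB.ι_surj (x : T2 C M) : ∃ y, x + F.ι M y ∈ rel2 C M := by
  induction x using TensorProduct.induction_on with
  | zero => exact ⟨0, by simp⟩
  | add x y hx hy =>
    obtain ⟨x', hx⟩ := hx
    obtain ⟨y', hy⟩ := hy
    refine ⟨x' + y', ?_⟩
    have := add_mem hx hy
    rw [map_add]
    convert this using 1; abel
  | tmul c m =>
    revert m
    refine F.ind (P := fun c => ∀ m, ∃ y, c ⊗ₜ[ZMod 2] m + F.ι M y ∈ rel2 C M) ?_ ?_ ?_ c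
    · intro m; exact ⟨0, by simp⟩
    · intro x y hx hy m
      obtain ⟨x', hx⟩ := hx m
      obtain ⟨y', hy⟩ := hy m
      refine ⟨x' + y', ?_⟩
      have := add_mem hx hy
      rw [map_add, add_tmul]
      convert this using 1; abel
    · intro i a b m
      refine ⟨Finsupp.single i (M.actR (M.actL b m) a), ?_⟩
      rw [F.ι_single]
      have := add_mem (rel2_1 C M (C.actL a (F.g i)) b m) (rel2_2 C M (F.g i) a (M.actL b m))
      convert this using 1
      rw [add_assoc, ← add_assoc (C.actL a (F.g i) ⊗ₜ[ZMod 2] _), z2_add_self, zero_add]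

theorem FreeB.ιι_ψ (x : T4 C M) : x + F.ιι M (F.ψ M x) ∈ rel4 C M := by
  refine T4_pure_induction C M (P := fun x => x + F.ιι M (F.ψ M x) ∈ rel4 C M) ?_ ?_ ?_ x
  · simp
  · intro x y hx hy
    have := add_mem hx hy
    simp only [map_add]
    convert this using 1; abel
  intro c m c' m'
  refine F.ind (P := fun c => c ⊗ₜ[ZMod 2] (m ⊗ₜ[ZMod 2] (c' ⊗ₜ[ZMod 2] m')) +
    F.ιι M (F.ψ M (c ⊗ₜ[ZMod 2] (m ⊗ₜ[ZMod 2] (c' ⊗ₜ[ZMod 2] m')))) ∈ rel4 C M) ?_ ?_ ?_ c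
  · simp
  · intro x y hx hy
    have := add_mem hx hy
    simp only [map_add, add_tmul]
    convert this using 1; abel
  intro i a b
  refine F.ind (P := fun c' =>
    (C.actR (C.actL a (F.g i)) b) ⊗ₜ[ZMod 2] (m ⊗ₜ[ZMod 2] (c' ⊗ₜ[ZMod 2] m')) +
    F.ιι M (F.ψ M ((C.actR (C.actL a (F.g i)) b) ⊗ₜ[ZMod 2] (m ⊗ₜ[ZMod 2] (c' ⊗ₜ[ZMod 2] m'))))
      ∈ rel4 C M) ?_ ?_ ?_ c'
  · simp
  · intro x y hx hy
    have := add_mem hx hy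
    simp only [map_add, add_tmul, tmul_add]
    convert this using 1; abel
  intro i' a' b'
  have e1 : F.ιι M (F.ψ M ((C.actR (C.actL a (F.g i)) b) ⊗ₜ[ZMod 2]
      (m ⊗ₜ[ZMod 2] ((C.actR (C.actL a' (F.g i')) b') ⊗ₜ[ZMod 2] m')))) =
      F.g i ⊗ₜ[ZMod 2] (M.actR (M.actL b m) a' ⊗ₜ[ZMod 2]
        (F.g i' ⊗ₜ[ZMod 2] M.actR (M.actL b' m') a)) := by
    rw [← mul4_tmul, F.ψ_mul4, F.θ_apply, F.θ_apply, F.ω_apply, F.xact_single, F.xact_single,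
      F.ιι_tmul, F.ι_single, F.ι_single, mul4_tmul]
  rw [e1]
  have h1 := rel4_1 C M (C.actL a (F.g i)) b m (C.actR (C.actL a' (F.g i')) b') m'
  have h2 := rel4_4 C M (C.actL a (F.g i)) b' (M.actL b m) (C.actL a' (F.g i')) m'
  have h3 := rel4_2 C M (F.g i) a (M.actL b m) (C.actL a' (F.g i')) (M.actL b' m')
  have h4 := rel4_3 C M (F.g i) a' (M.actL b m) (F.g i') (M.actR (M.actL b' m') a)
  rw [← Submodule.Quotient.mk_eq_zero] at h1 h2 h3 h4 ⊢
  simp only [Submodule.Quotient.mk_add] at h1 h2 h3 h4 ⊢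
  rw [← z2_sub, sub_eq_zero] at h1 h2 h3 h4 ⊢
  rw [h1, h2, h3, h4]

theorem FreeB.K1 {C : DGBimod A} (F : FreeB C) (M : DGBimod A) (x : T2 C M) (h : sq C M x ∈ relopt C M) : x ∈ rel2 C M := by
  obtain ⟨y, hy⟩ := F.ι_surj M x
  have h1 := sq_rel C M hy
  rw [sq_add] at h1
  have h2 : sq C M (F.ι M y) ∈ relopt C M := by
    have := sub_mem (sub_mem h1 (relopt_opt C M (mul4 C M x (F.ι M y)))) h
    convert this using 1; abel
  obtain ⟨ρ, hρ, _, ⟨t, rfl⟩, h3⟩ := Submodule.mem_sup.1 h2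
  have h4 := congrArg (F.ψ M) h3
  rw [map_add, F.ψ_rel M hρ, zero_add, opt_apply, map_add, F.ψ_tau, sq, F.ψι] at h4
  have := sq_inj y _ h4.symm
  rw [this] at hy
  simpa using hy

theorem FreeB.K2 {C : DGBimod A} (F : FreeB C) (M : DGBimod A) (x : T4 C M) (h : opt C M x ∈ rel4 C M) :
    ∃ u, x + sq C M u ∈ relopt C M := by
  have h1 := F.ψ_rel M h
  rw [opt_apply, map_add, F.ψ_tau] at h1
  obtain ⟨u, v, huv⟩ := sq_surj _ h1
  refine ⟨F.ι M u, ?_⟩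
  have h2 := relopt_rel C M (F.ιι_ψ M x)
  rw [huv, map_add, map_add, F.ιι_comm, F.ιι_tmul] at h2
  have := sub_mem h2 (relopt_opt C M (F.ιι M v))
  convert this using 1
  rw [opt_apply, sq]; abel

end Free

section Retract
variable {R C : DGBimod A} (f : R.V →ₗ[ZMod 2] C.V) (M : DGBimod A)

def fT2 : T2 R M →ₗ[ZMod 2] T2 C M := TensorProduct.map f LinearMap.id
def fT4 : T4 R M →ₗ[ZMod 2] T4 C M :=
  TensorProduct.map f (TensorProduct.map LinearMap.id (TensorProduct.map f LinearMap.id))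

theorem fT4_mul4 (x y) : fT4 f M (mul4 R M x y) = mul4 C M (fT2 f M x) (fT2 f M y) := by
  induction x using TensorProduct.induction_on with
  | zero => simp
  | add x y hx hy => simp only [map_add, mul4_add_left, hx, hy]
  | tmul r m => rw [mul4_tmul, fT4, map_tmul, map_tmul, fT2, map_tmul, mul4_tmul]

theorem fT4_tau (x) : fT4 f M (tau4 R M x) = tau4 C M (fT4 f M x) := by
  refine T4_pure_induction R M (P := fun x => fT4 f M (tau4 R M x) = tau4 C M (fT4 f M x))
    ?_ ?_ ?_ x
  · simp
  · intro x y hx hy; simp only [map_add, hx, hy]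
  · intro r m r' m'; simp [fT4]

theorem fT4_opt (x) : fT4 f M (opt R M x) = opt C M (fT4 f M x) := by
  simp only [opt_apply, map_add, fT4_tau]

theorem fT2_rel (hf : IsBHom R C 0 f) {x} (hx : x ∈ rel2 R M) : fT2 f M x ∈ rel2 C M := by
  suffices h : rel2 R M ≤ (rel2 C M).comap (fT2 f M) from h hx
  obtain ⟨-, -, hl, hr⟩ := hf
  refine Submodule.span_le.2 ?_
  rintro _ (⟨r, a, m, rfl⟩ | ⟨r, a, m, rfl⟩)
  · simp only [SetLike.mem_coe, Submodule.mem_comap, map_add, fT2, map_tmul, hr, LinearMap.id_apply]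
    exact rel2_1 C M _ _ _
  · simp only [SetLike.mem_coe, Submodule.mem_comap, map_add, fT2, map_tmul, hl, LinearMap.id_apply]
    exact rel2_2 C M _ _ _

theorem fT4_rel (hf : IsBHom R C 0 f) {x} (hx : x ∈ rel4 R M) : fT4 f M x ∈ rel4 C M := by
  suffices h : rel4 R M ≤ (rel4 C M).comap (fT4 f M) from h hx
  obtain ⟨-, -, hl, hr⟩ := hf
  apply rel4_le <;> intro r a m r' m' <;>
    simp only [Submodule.mem_comap, map_add, fT4, map_tmul, hl, hr, LinearMap.id_apply]
  · exact rel4_1 C M _ _ _ _ _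
  · exact rel4_2 C M _ _ _ _ _
  · exact rel4_3 C M _ _ _ _ _
  · exact rel4_4 C M _ _ _ _ _

theorem fT4_relopt (hf : IsBHom R C 0 f) {x} (hx : x ∈ relopt R M) :
    fT4 f M x ∈ relopt C M := by
  obtain ⟨ρ, hρ, _, ⟨t, rfl⟩, rfl⟩ := Submodule.mem_sup.1 hx
  rw [map_add, fT4_opt]
  exact add_mem (relopt_rel _ _ (fT4_rel f M hf hρ)) (relopt_opt _ _ _)

end Retract

variable (R M : DGBimod A)

theorem K1 (h : IsCellRetract R) (x : T2 R M) (hx : sq R M x ∈ relopt R M) : x ∈ rel2 R M := by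
  obtain ⟨C, hC, i, r, hi, hr, -, hri⟩ := h
  obtain ⟨F⟩ := cell_free C hC
  have h1 := fT4_relopt i M hi hx
  rw [sq, fT4_mul4] at h1
  have h2 := fT2_rel r M hr (F.K1 M _ h1)
  have : fT2 r M (fT2 i M x) = x := by
    rw [fT2, fT2, ← LinearMap.comp_apply, ← TensorProduct.map_comp, hri]; simp
  rwa [this] at h2

theorem K2 (h : IsCellRetract R) (x : T4 R M) (hx : opt R M x ∈ rel4 R M) :
    ∃ u, x + sq R M u ∈ relopt R M := by
  obtain ⟨C, hC, i, r, hi, hr, -, hri⟩ := h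
  obtain ⟨F⟩ := cell_free C hC
  have h1 := fT4_rel i M hi hx
  rw [fT4_opt] at h1
  obtain ⟨u, hu⟩ := F.K2 M _ h1
  have h2 := fT4_relopt r M hr hu
  refine ⟨fT2 r M u, ?_⟩
  have : fT4 r M (fT4 i M x) = x := by
    rw [fT4, fT4, ← LinearMap.comp_apply, ← TensorProduct.map_comp, ← TensorProduct.map_comp,
      ← TensorProduct.map_comp, hri]; simp
  rwa [map_add, this, sq, fT4_mul4] at h2


end Part5

section Part6

section QTsec
variable {T : Type} [AddCommGroup T] [Module (ZMod 2) T] (Z B : Submodule (ZMod 2) T)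

def QT : Type := ↥Z ⧸ Submodule.comap Z.subtype B
instance : AddCommGroup (QT Z B) := inferInstanceAs (AddCommGroup (_ ⧸ _))
instance : Module (ZMod 2) (QT Z B) := inferInstanceAs (Module (ZMod 2) (_ ⧸ _))
def QT.mk : Z →ₗ[ZMod 2] QT Z B := Submodule.mkQ (Submodule.comap Z.subtype B)

theorem QT.mk_surj (z : QT Z B) : ∃ x, QT.mk Z B x = z := Submodule.mkQ_surjective _ z
theorem QT.mk_zero (x : Z) : QT.mk Z B x = 0 ↔ x.1 ∈ B :=
  Submodule.Quotient.mk_eq_zero (Submodule.comap Z.subtype B)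
theorem QT.mk_eq (x y : Z) : QT.mk Z B x = QT.mk Z B y ↔ x.1 - y.1 ∈ B := by
  rw [← sub_eq_zero, ← map_sub, QT.mk_zero]; rfl
end QTsec

variable {A : DGA (ZMod 2)} (R M : DGBimod A)

theorem π4_sq (u : T2 R M) (n : ℤ) :
    (∃ t, π4 R M (2 * n) (sq R M u) = sq R M (π2 R M n u) + opt R M t) ∧
    (∃ t, π4 R M (2 * n + 1) (sq R M u) = opt R M t) := by
  refine Submodule.iSup_induction (gr2 R M) (motive := fun u =>
    (∃ t, π4 R M (2 * n) (sq R M u) = sq R M (π2 R M n u) + opt R M t) ∧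
    (∃ t, π4 R M (2 * n + 1) (sq R M u) = opt R M t)) (iSup_gr2 R M u) ?_ ?_ ?_
  · intro i x hx
    have hs : sq R M x ∈ gr4 R M (2 * i) := mul4_gr R M hx hx (by ring)
    constructor
    · refine ⟨0, ?_⟩
      by_cases h : i = n
      · subst h; rw [π4_same R M hs, π2_same R M hx, map_zero, add_zero]
      · rw [π4_ne R M hs (by omega), π2_ne R M hx h]; simp [sq]
    · refine ⟨0, ?_⟩
      rw [π4_ne R M hs (by omega), map_zero]
  · exact ⟨⟨0, by simp [sq]⟩, ⟨0, by simp [sq]⟩⟩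
  · rintro x y ⟨⟨t, ht⟩, ⟨s, hs⟩⟩ ⟨⟨t', ht'⟩, ⟨s', hs'⟩⟩
    constructor
    · refine ⟨t + t' + π4 R M (2 * n) (mul4 R M x y) - mul4 R M (π2 R M n x) (π2 R M n y), ?_⟩
      rw [sq_add, map_add, map_add, ht, ht', opt_π4, map_add (π2 R M n), sq_add]
      simp only [map_add, map_sub]; abel
    · refine ⟨s + s' + π4 R M (2 * n + 1) (mul4 R M x y), ?_⟩
      rw [sq_add, map_add, map_add, hs, hs', opt_π4]
      simp only [map_add]

theorem relopt_gr {q : ℤ} {x : T4 R M} (hx : x ∈ gr4 R M q) (h : x ∈ relopt R M) :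
    ∃ t ∈ gr4 R M q, ∃ ρ ∈ rel4 R M, x = opt R M t + ρ := by
  obtain ⟨ρ, hρ, _, ⟨t, rfl⟩, e⟩ := Submodule.mem_sup.1 h
  refine ⟨π4 R M q t, π4_mem R M q t, π4 R M q ρ, π4_rel R M q hρ, ?_⟩
  rw [← opt_π4, ← map_add, add_comm, e, π4_same R M hx]

theorem K2_even (h : IsCellRetract R) {n : ℤ} {x : T4 R M} (hx : x ∈ gr4 R M (2 * n))
    (ho : opt R M x ∈ rel4 R M) :
    ∃ u ∈ gr2 R M n, ∃ t ∈ gr4 R M (2 * n), ∃ ρ ∈ rel4 R M,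
      x = sq R M u + (opt R M t + ρ) := by
  obtain ⟨u, hu⟩ := K2 R M h x ho
  refine ⟨π2 R M n u, π2_mem R M n u, ?_⟩
  have hs : sq R M (π2 R M n u) ∈ gr4 R M (2 * n) :=
    mul4_gr R M (π2_mem R M n u) (π2_mem R M n u) (by ring)
  obtain ⟨t', ht'⟩ := (π4_sq R M u n).1
  have : x - sq R M (π2 R M n u) ∈ relopt R M := by
    obtain ⟨ρ, hρ, _, ⟨t, rfl⟩, e⟩ := Submodule.mem_sup.1 hu
    have e2 := congrArg (π4 R M (2 * n)) e
    rw [map_add, map_add, opt_π4, π4_same R M hx, ht'] at e2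
    have : x - sq R M (π2 R M n u) = π4 R M (2 * n) ρ + opt R M (π4 R M (2 * n) t - t') := by
      rw [z2_sub, map_sub, ← add_sub_assoc, e2]; abel
    rw [this]
    exact add_mem (relopt_rel _ _ (π4_rel R M _ hρ)) (relopt_opt _ _ _)
  obtain ⟨t, ht, ρ, hρ, e⟩ := relopt_gr R M (sub_mem hx hs) this
  exact ⟨t, ht, ρ, hρ, by rw [← e]; abel⟩

theorem K2_odd (h : IsCellRetract R) {n : ℤ} {x : T4 R M} (hx : x ∈ gr4 R M (2 * n + 1))
    (ho : opt R M x ∈ rel4 R M) :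
    ∃ t ∈ gr4 R M (2 * n + 1), ∃ ρ ∈ rel4 R M, x = opt R M t + ρ := by
  obtain ⟨u, hu⟩ := K2 R M h x ho
  obtain ⟨t', ht'⟩ := (π4_sq R M u n).2
  refine relopt_gr R M hx ?_
  obtain ⟨ρ, hρ, _, ⟨t, rfl⟩, e⟩ := Submodule.mem_sup.1 hu
  have e2 := congrArg (π4 R M (2 * n + 1)) e
  rw [map_add, map_add, opt_π4, π4_same R M hx, ht'] at e2
  have : x = π4 R M (2 * n + 1) ρ + opt R M (π4 R M (2 * n + 1) t - t') := by
    rw [map_sub, ← add_sub_assoc, e2]; abel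
  rw [this]
  exact add_mem (relopt_rel _ _ (π4_rel R M _ hρ)) (relopt_opt _ _ _)

/-! concrete forms of the pieces of the Tate bicomplex -/

def TN : Submodule (ZMod 2) (ℤ →₀ T4 R M) :=
  ⨅ p : ℤ, Submodule.comap (Finsupp.lapply p) (rel4 R M)
def TF (q n : ℤ) : Submodule (ZMod 2) (ℤ →₀ T4 R M) :=
  ⨆ (j : ℤ) (_ : j ≤ q), Submodule.map (Finsupp.lsingle (n - j)) (gr4 R M j)
def TD : (ℤ →₀ T4 R M) →ₗ[ZMod 2] (ℤ →₀ T4 R M) :=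
  (Finsupp.lmapDomain (T4 R M) (ZMod 2) (fun p : ℤ => p - 1)).comp
    (Finsupp.mapRange.linearMap (LinearMap.id + tau4 R M)) +
  Finsupp.mapRange.linearMap (d4 R M)
def TZ (r q n : ℤ) : Submodule (ZMod 2) (ℤ →₀ T4 R M) :=
  (TF R M q n ⊔ TN R M) ⊓ Submodule.comap (TD R M) (TF R M (q - r) (n - 1) ⊔ TN R M)
def TB (r q n : ℤ) : Submodule (ZMod 2) (ℤ →₀ T4 R M) :=
  Submodule.map (TD R M) (TZ R M (r - 1) (q + r - 1) (n + 1)) ⊔ TZ R M (r - 1) (q - 1) n ⊔ TN R M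

abbrev TE (r q n : ℤ) : Type :=
  QT (T := ℤ →₀ T4 R M) (TZ R M r q n) (TB R M r q n)

theorem TD_single (p : ℤ) (x : T4 R M) :
    TD R M (Finsupp.single p x) =
      Finsupp.single (p - 1) (opt R M x) + Finsupp.single p (d4 R M x) := by
  simp [TD, opt, Finsupp.mapDomain_add, Finsupp.mapDomain_single]

theorem TD_apply (z : ℤ →₀ T4 R M) (p : ℤ) :
    TD R M z p = opt R M (z (p + 1)) + d4 R M (z p) := by
  induction z using Finsupp.induction_linear with
  | zero => simp
  | add f g hf hg => simp only [map_add, Finsupp.add_apply, hf, hg]; abel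
  | single i x =>
    rw [TD_single, Finsupp.add_apply]
    congr 1
    · by_cases h : i = p + 1
      · subst h; simp
      · rw [Finsupp.single_eq_of_ne (by omega), Finsupp.single_eq_of_ne (by omega), map_zero]
    · by_cases h : i = p
      · subst h; simp
      · rw [Finsupp.single_eq_of_ne (by omega), Finsupp.single_eq_of_ne (by omega), map_zero]

theorem TN_apply {z} (hz : z ∈ TN R M) (i : ℤ) : z i ∈ rel4 R M := by
  rw [TN, Submodule.mem_iInf] at hz
  exact hz i

theorem TN_single (p : ℤ) {x : T4 R M} (hx : x ∈ rel4 R M) : Finsupp.single p x ∈ TN R M := by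
  rw [TN, Submodule.mem_iInf]
  intro i
  rw [Submodule.mem_comap, Finsupp.lapply_apply]
  by_cases h : p = i
  · subst h; simpa using hx
  · rw [Finsupp.single_eq_of_ne (by omega)]; exact zero_mem _

theorem TD_TN {z} (hz : z ∈ TN R M) : TD R M z ∈ TN R M := by
  rw [TN, Submodule.mem_iInf]
  intro i
  rw [Submodule.mem_comap, Finsupp.lapply_apply, TD_apply]
  exact add_mem (opt_rel R M (TN_apply R M hz _)) (d4_rel R M (TN_apply R M hz _))

theorem TF_single {p j q n : ℤ} (hj : j ≤ q) (hp : p + j = n) {x : T4 R M}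
    (hx : x ∈ gr4 R M j) : Finsupp.single p x ∈ TF R M q n := by
  obtain rfl : p = n - j := by omega
  exact Submodule.mem_iSup_of_mem j (Submodule.mem_iSup_of_mem hj ⟨x, hx, rfl⟩)

theorem TD_TF {q n : ℤ} {z} (hz : z ∈ TF R M q n) : TD R M z ∈ TF R M q (n - 1) := by
  suffices h : TF R M q n ≤ (TF R M q (n - 1)).comap (TD R M) from h hz
  refine iSup₂_le fun j hj => ?_
  rintro _ ⟨x, hx, rfl⟩
  rw [Submodule.mem_comap, Finsupp.lsingle_apply, TD_single]
  exact add_mem (TF_single R M hj (by ring) (opt_gr R M hx))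
    (TF_single R M (j := j - 1) (by omega) (by ring) (d4_gr R M hx))

theorem TF_le_TZ0 {q n : ℤ} {z} (hz : z ∈ TF R M q n) : z ∈ TZ R M 0 q n := by
  refine ⟨Submodule.mem_sup_left hz, ?_⟩
  rw [sub_zero]
  exact Submodule.mem_sup_left (TD_TF R M hz)

theorem TFN_apply {q n : ℤ} {z} (hz : z ∈ TF R M q n ⊔ TN R M) (i : ℤ) :
    z i ∈ gr4 R M (n - i) ⊔ rel4 R M ∧ (q < n - i → z i ∈ rel4 R M) := by
  constructor
  · suffices h : TF R M q n ⊔ TN R M ≤ (gr4 R M (n - i) ⊔ rel4 R M).comap (Finsupp.lapply i) from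
      h hz
    refine sup_le (iSup₂_le fun j hj => ?_)
      (fun z hz => Submodule.mem_sup_right (TN_apply R M hz i))
    rintro _ ⟨x, hx, rfl⟩
    rw [Submodule.mem_comap, Finsupp.lapply_apply, Finsupp.lsingle_apply]
    by_cases h : n - j = i
    · subst h
      rw [Finsupp.single_eq_same, sub_sub_cancel]; exact Submodule.mem_sup_left hx
    · rw [Finsupp.single_eq_of_ne (by omega)]; exact zero_mem _
  · intro hq
    suffices h : TF R M q n ⊔ TN R M ≤ (rel4 R M).comap (Finsupp.lapply i) from
      h hz
    refine sup_le (iSup₂_le fun j hj => ?_) (fun z hz => TN_apply R M hz i)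
    rintro _ ⟨x, hx, rfl⟩
    rw [Submodule.mem_comap, Finsupp.lapply_apply, Finsupp.lsingle_apply]
    rw [Finsupp.single_eq_of_ne (by omega)]; exact zero_mem _

theorem TF_split {q n : ℤ} : TF R M q n ≤
    Submodule.map (Finsupp.lsingle (n - q)) (gr4 R M q) ⊔ TF R M (q - 1) n := by
  refine iSup₂_le fun j hj => ?_
  rcases hj.lt_or_eq with h | h
  · exact le_sup_of_le_right (le_iSup₂_of_le j (by omega) le_rfl)
  · subst h; exact le_sup_left

theorem TN_le_TB {q n : ℤ} {z} (hz : z ∈ TN R M) : z ∈ TB R M 1 q n :=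
  Submodule.mem_sup_right hz

theorem TF_le_TB {q n : ℤ} {z} (hz : z ∈ TF R M (q - 1) n) : z ∈ TB R M 1 q n := by
  refine Submodule.mem_sup_left (Submodule.mem_sup_right ?_)
  exact TF_le_TZ0 R M hz

theorem opt_mem_TB (p : ℤ) {q : ℤ} {t : T4 R M} (ht : t ∈ gr4 R M q) :
    Finsupp.single p (opt R M t) ∈ TB R M 1 q (p + q) := by
  have h1 : TD R M (Finsupp.single (p + 1) t) ∈ TB R M 1 q (p + q) := by
    refine Submodule.mem_sup_left (Submodule.mem_sup_left ⟨_, ?_, rfl⟩)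
    rw [sub_self]
    exact TF_le_TZ0 R M (TF_single R M (j := q) (by omega) (by ring) ht)
  have h2 : Finsupp.single (p + 1) (d4 R M t) ∈ TB R M 1 q (p + q) :=
    TF_le_TB R M (TF_single R M (j := q - 1) le_rfl (by ring) (d4_gr R M ht))
  have := sub_mem h1 h2
  rwa [TD_single, add_sub_cancel_right, add_sub_cancel_right] at this

theorem TB_apply {p q : ℤ} {z} (hz : z ∈ TB R M 1 q (p + q)) : z p ∈ relopt R M := by
  obtain ⟨_, hy, ν, hν, rfl⟩ := Submodule.mem_sup.1 hz
  obtain ⟨_, ⟨b, hb, rfl⟩, w, hw, rfl⟩ := Submodule.mem_sup.1 hy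
  rw [Finsupp.add_apply, Finsupp.add_apply]
  refine add_mem (add_mem ?_ ?_) (relopt_rel R M (TN_apply R M hν p))
  · rw [TD_apply]
    exact add_mem (relopt_opt _ _ _)
      (relopt_rel _ _ (d4_rel R M ((TFN_apply R M hb.1 p).2 (by omega))))
  · exact relopt_rel _ _ ((TFN_apply R M hw.1 p).2 (by omega))

theorem TZ_decomp {p q : ℤ} {z} (hz : z ∈ TZ R M 1 q (p + q)) :
    ∃ g ∈ gr4 R M q, opt R M g ∈ rel4 R M ∧ z - Finsupp.single p g ∈ TB R M 1 q (p + q) := by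
  obtain ⟨h1, h2⟩ := hz
  obtain ⟨y, hy, ν, hν, rfl⟩ := Submodule.mem_sup.1 h1
  obtain ⟨_, ⟨g, hg, rfl⟩, w, hw, rfl⟩ := Submodule.mem_sup.1 (TF_split R M hy)
  rw [Finsupp.lsingle_apply, add_sub_cancel_right] at *
  refine ⟨g, hg, ?_, ?_⟩
  · have h3 := (TFN_apply R M h2 (p - 1)).2 (by omega)
    rw [TD_apply, sub_add_cancel] at h3
    have h4 := d4_rel R M ((TFN_apply R M h1 (p - 1)).2 (by omega))
    have h5 := (Submodule.add_mem_iff_left _ h4).1 h3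
    have h6 := opt_rel R M ((TFN_apply R M (Submodule.mem_sup_left hw :
      w ∈ TF R M (q - 1) (p + q) ⊔ TN R M) p).2 (by omega))
    have h7 := opt_rel R M (TN_apply R M hν p)
    simp only [Finsupp.add_apply, Finsupp.single_eq_same, map_add] at h5
    exact (Submodule.add_mem_iff_left _ h6).1 ((Submodule.add_mem_iff_left _ h7).1 h5)
  · have := add_mem (TF_le_TB R M hw) (TN_le_TB (q := q) (n := p + q) R M hν)
    convert this using 1; abel

theorem sq_mem_TZ (p : ℤ) {n : ℤ} {x : T2 R M} (hx : x ∈ gr2 R M n) :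
    Finsupp.single p (sq R M x) ∈ TZ R M 1 (2 * n) (p + 2 * n) := by
  have hs : sq R M x ∈ gr4 R M (2 * n) := mul4_gr R M hx hx (by ring)
  refine ⟨Submodule.mem_sup_left (TF_single R M le_rfl rfl hs), ?_⟩
  rw [SetLike.mem_coe, Submodule.mem_comap, TD_single, opt_sq, Finsupp.single_zero, zero_add]
  exact Submodule.mem_sup_left (TF_single R M le_rfl (by ring) (d4_gr R M hs))

def frobFun (n p : ℤ) (x : ↥(gr2 R M n ⊔ rel2 R M)) : TE R M 1 (2 * n) (p + 2 * n) :=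
  QT.mk _ _ ⟨Finsupp.single p (sq R M (π2 R M n x.1)),
    sq_mem_TZ R M p (π2_mem R M n x.1)⟩

theorem frobFun_add (n p : ℤ) (x y) :
    frobFun R M n p (x + y) = frobFun R M n p x + frobFun R M n p y := by
  unfold frobFun
  rw [← map_add, QT.mk_eq]
  have := opt_mem_TB R M p (q := 2 * n) (mul4_gr R M (π2_mem R M n x.1) (π2_mem R M n y.1)
    (by ring))
  convert this using 1
  simp only [Submodule.subtype_apply, Submodule.coe_sub, Submodule.coe_add, map_add, sq_add,
    Finsupp.single_add]
  abel

theorem frobFun_zero (h : IsCellRetract R) (n p : ℤ) (x) :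
    frobFun R M n p x = 0 ↔ x.1 ∈ rel2 R M := by
  have hx : π2 R M n x.1 + x.1 ∈ rel2 R M := by
    obtain ⟨x, hx⟩ := x
    obtain ⟨g, hg, ρ, hρ, rfl⟩ := Submodule.mem_sup.1 hx
    have := add_mem (π2_rel R M n hρ) hρ
    simp only [map_add, π2_same R M hg]
    convert this using 1
    rw [add_comm g, add_assoc, ← add_assoc g, z2_add_self, zero_add]
  unfold frobFun
  rw [QT.mk_zero]
  constructor
  · intro h1
    have h2 := TB_apply R M h1
    rw [Finsupp.single_eq_same] at h2
    exact (Submodule.add_mem_iff_right _ (K1 R M h _ h2)).1 hx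
  · intro h1
    have h2 := (Submodule.add_mem_iff_left _ h1).1 hx
    obtain ⟨t, ht, ρ, hρ, e⟩ := relopt_gr R M (q := 2 * n)
      (mul4_gr R M (π2_mem R M n x.1) (π2_mem R M n x.1) (by ring)) (sq_rel R M h2)
    change Finsupp.single p (mul4 R M (π2 R M n x.1) (π2 R M n x.1)) ∈ _
    rw [e, Finsupp.single_add]
    exact add_mem (opt_mem_TB R M p ht) (TN_le_TB R M (TN_single R M p hρ))

theorem frobFun_surj (h : IsCellRetract R) (n p : ℤ) : Function.Surjective (frobFun R M n p) := by
  intro z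
  obtain ⟨⟨z, hz⟩, rfl⟩ := QT.mk_surj _ _ z
  obtain ⟨g, hg, ho, hb⟩ := TZ_decomp R M hz
  obtain ⟨u, hu, t, ht, ρ, hρ, rfl⟩ := K2_even R M h hg ho
  refine ⟨⟨u, Submodule.mem_sup_left hu⟩, ?_⟩
  unfold frobFun
  rw [Eq.comm, QT.mk_eq]
  have := add_mem hb (add_mem (opt_mem_TB R M p ht)
    (TN_le_TB (q := 2 * n) (n := p + 2 * n) R M (TN_single R M p hρ)))
  convert this using 1
  simp only [Submodule.subtype_apply, Submodule.coe_sub, π2_same R M hu, Finsupp.single_add]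
  abel

def frobLin (n p : ℤ) :
    ↥(gr2 R M n ⊔ rel2 R M) →ₗ[ZMod 2] TE R M 1 (2 * n) (p + 2 * n) :=
  AddMonoidHom.toZModLinearMap 2 (AddMonoidHom.mk' (frobFun R M n p) (frobFun_add R M n p))

theorem frobLin_apply (n p : ℤ) (x) : frobLin R M n p x = frobFun R M n p x := rfl

theorem exists_frob (h : IsCellRetract R) (n p : ℤ) :
    ∃ e : HCdeg R M n ≃ₗ[ZMod 2] TE R M 1 (2 * n) (p + 2 * n),
      ∀ x, e (Submodule.Quotient.mk x) = frobFun R M n p x := by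
  have hker : Submodule.comap (gr2 R M n ⊔ rel2 R M).subtype (rel2 R M) =
      LinearMap.ker (frobLin R M n p) := by
    ext x
    rw [LinearMap.mem_ker, frobLin_apply, frobFun_zero R M h]; rfl
  refine ⟨LinearEquiv.ofBijective (Submodule.liftQ _ (frobLin R M n p) hker.le) ⟨?_, ?_⟩, ?_⟩
  · rw [← LinearMap.ker_eq_bot]
    exact Submodule.ker_liftQ_eq_bot _ _ _ hker.ge
  · rw [← LinearMap.range_eq_top, Submodule.range_liftQ, LinearMap.range_eq_top]
    exact frobFun_surj R M h n p
  · intro x; rfl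

theorem sq_sum {L : Type} (s : Finset L) (n : ℤ) (c : L → ZMod 2) (x : L → T2 R M)
    (hx : ∀ l, x l ∈ gr2 R M n) :
    ∃ t ∈ gr4 R M (2 * n),
      sq R M (∑ l ∈ s, c l • x l) = ∑ l ∈ s, (c l * c l) • sq R M (x l) + opt R M t := by
  classical
  induction s using Finset.induction_on with
  | empty => exact ⟨0, zero_mem _, by simp [sq]⟩
  | insert a s ha ih =>
    obtain ⟨t, ht, e⟩ := ih
    refine ⟨t + mul4 R M (c a • x a) (∑ l ∈ s, c l • x l), add_mem ht (mul4_gr R M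
      (Submodule.smul_mem _ _ (hx a)) (Submodule.sum_mem _ fun l _ =>
        Submodule.smul_mem _ _ (hx l)) (by ring)), ?_⟩
    rw [Finset.sum_insert ha, Finset.sum_insert ha, sq_add, e, map_add]
    have : sq R M (c a • x a) = (c a * c a) • sq R M (x a) := by
      simp only [sq, mul4_smul_left, mul4_smul_right, smul_smul]
    rw [this]; abel

theorem TE_odd (h : IsCellRetract R) (p n : ℤ) :
    Subsingleton (TE R M 1 (2 * n + 1) (p + (2 * n + 1))) := by
  refine subsingleton_of_forall_eq 0 fun z => ?_
  obtain ⟨⟨z, hz⟩, rfl⟩ := QT.mk_surj _ _ z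
  obtain ⟨g, hg, ho, hb⟩ := TZ_decomp R M hz
  obtain ⟨t, ht, ρ, hρ, rfl⟩ := K2_odd R M h hg ho
  rw [QT.mk_zero]
  have := add_mem hb (add_mem (opt_mem_TB R M p ht)
    (TN_le_TB (q := 2 * n + 1) (n := p + (2 * n + 1)) R M (TN_single R M p hρ)))
  convert this using 1
  simp only [Submodule.subtype_apply, Finsupp.single_add]
  abel


end Part6

end FrobeniusProof

/-- **Proposition 3.9.** For each `k`, the assignment `ξ ↦ ξ^{⊗2} + Im(1+τ)` is an
`𝔽₂`-linear isomorphism of `HC_k(M)` onto `ʰᵛE¹_{p,2k}` for every `p`; moreover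
`ʰᵛE¹_{p,2k+1} = 0`. -/
theorem frobenius_isomorphism_E1
    (A : DGA (ZMod 2)) (R : DGBimod A) (ρ : R.V →ₗ[ZMod 2] A.diag.V)
    (hres : IsResolution R A.diag ρ) (M : DGBimod A) :
    (∀ n p : ℤ,
      ∃ e : HCdeg R M n ≃ₗ[ZMod 2] (TateBicx R M).hvE 1 p (2 * n),
        ∀ (L : Type) (_ : Fintype L) (c : L → ZMod 2) (r : L → R.V) (m : L → M.V),
          (∀ l, ∃ i j, r l ∈ R.gr i ∧ m l ∈ M.gr j ∧ i + j = n) →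
          ∀ (hx : (∑ l, c l • (r l ⊗ₜ[ZMod 2] m l)) ∈ gr2 R M n ⊔ rel2 R M)
            (hsq : Finsupp.single p
                (∑ l, (c l * c l) •
                  (r l ⊗ₜ[ZMod 2] (m l ⊗ₜ[ZMod 2] (r l ⊗ₜ[ZMod 2] m l)))) ∈
              (TateBicx R M).Zpage (TateBicx R M).Frow 1 (2 * n) (p + 2 * n)),
            e (Submodule.Quotient.mk ⟨∑ l, c l • (r l ⊗ₜ[ZMod 2] m l), hx⟩) =
              Submodule.Quotient.mk ⟨Finsupp.single p
                (∑ l, (c l * c l) •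
                  (r l ⊗ₜ[ZMod 2] (m l ⊗ₜ[ZMod 2] (r l ⊗ₜ[ZMod 2] m l)))), hsq⟩) ∧
    (∀ p k : ℤ, Subsingleton ((TateBicx R M).hvE 1 p (2 * k + 1))) := by
  obtain ⟨hcell, -, -⟩ := hres
  refine ⟨fun n p => ?_, fun p k => TE_odd R M hcell p k⟩
  obtain ⟨e, he⟩ := exists_frob R M hcell n p
  refine ⟨e, ?_⟩
  intro L _ c r m hrm hx hsq
  refine (he _).trans ?_
  have hmem : ∀ l, r l ⊗ₜ[ZMod 2] m l ∈ gr2 R M n := by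
    intro l
    obtain ⟨i, j, hi, hj, rfl⟩ := hrm l
    exact tmul2_mem R M hi hj rfl
  obtain ⟨t, ht, e1⟩ := sq_sum R M Finset.univ n c (fun l => r l ⊗ₜ[ZMod 2] m l) hmem
  have hsum : (∑ l, c l • (r l ⊗ₜ[ZMod 2] m l)) ∈ gr2 R M n :=
    Submodule.sum_mem _ fun l _ => Submodule.smul_mem _ _ (hmem l)
  refine (QT.mk_eq (TZ R M 1 (2 * n) (p + 2 * n)) (TB R M 1 (2 * n) (p + 2 * n)) _
    ⟨_, hsq⟩).2 ?_
  have h := opt_mem_TB R M p ht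
  convert h using 1
  rw [← Finsupp.single_sub]
  congr 1
  rw [π2_same R M hsum, e1]
  simp only [sq, mul4_tmul]
  abel

end LT
end
end
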